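/- Let Ω ⊂ ℂⁿ × ℝ be a bounded domain with smooth boundary whose CR singular points (points where the tangent space to ∂Ω contains ℂⁿ × {0}, equivalently where ∂Ω is tangent to a leaf ℂⁿ × {c}) are all nondegenerate and elliptic. Then ∂Ω has exactly two CR singular points, ∂Ω is homeomorphic to the sphere S^{2n}, and for each c ∈ ℝ the slice Ω ∩ (ℂⁿ × {c}) is either empty or a bounded domain with connected smooth boundary. -/

import Mathlib

/-- `p` is a CR singular point of `∂Ω`: the boundary is tangent there to a leaf
`ℂⁿ × {c}`, i.e. the differential of the defining function kills `ℂⁿ × {0}`. -/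
def CRSingular (n : ℕ) (ρ : ((Fin n → ℂ) × ℝ) → ℝ) (Ω : Set ((Fin n → ℂ) × ℝ))
    (p : (Fin n → ℂ) × ℝ) : Prop :=
  p ∈ frontier Ω ∧ ∀ v : Fin n → ℂ, fderiv ℝ ρ p (v, 0) = 0

/-- The model elliptic quadric `Q(z,z̄) = Σ (|z_j|² + λ_j(z_j² + z̄_j²))`. -/
noncomputable def EllipticQ (n : ℕ) (lam : Fin n → ℝ) (z : Fin n → ℂ) : ℝ :=
  ∑ j, (‖z j‖^2 + 2 * lam j * ((z j)^2).re)

/-- `p` is a nondegenerate elliptic CR singular point: near `p` (after possibly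
flipping the sign of `s`) the domain is given by `s > Q(z,z̄) + E(z,z̄)` with
`Q` elliptic nondegenerate and `E` smooth, real-valued and `O(3)`. -/
def NondegElliptic (n : ℕ) (Ω : Set ((Fin n → ℂ) × ℝ)) (p : (Fin n → ℂ) × ℝ) : Prop :=
  ∃ (lam : Fin n → ℝ) (σ : ℝ) (E : (Fin n → ℂ) → ℝ) (r : ℝ),
    (∀ j, 0 ≤ lam j ∧ lam j < 1/2) ∧ (σ = 1 ∨ σ = -1) ∧ 0 < r ∧
    ContDiff ℝ (⊤ : ℕ∞) E ∧ E 0 = 0 ∧ fderiv ℝ E 0 = 0 ∧ iteratedFDeriv ℝ 2 E 0 = 0 ∧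
    ∀ (z : Fin n → ℂ) (s : ℝ), ‖z‖ < r → |s| < r →
      ((p.1 + z, p.2 + σ * s) ∈ Ω ↔ EllipticQ n lam z + E z < s)

/-!
The vector field `|∇ρ|² ∂ₛ - (∂ₛρ) ∇ρ`, with the gradient taken along the leaves, is tangent to the
boundary of `Ω` and climbs there except at the CR singular points. Adding `ρ² ∂ₛ` makes it climb
inside `Ω` as well, so it generates a flow on the closure of `Ω` which preserves `Ω`, has the height
as a strict Lyapunov function and the CR singular points as its rest points. Near an elliptic point
`Ω` lies strictly on one side of the leaf, so each rest point is a local repeller or a local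
attractor, and every other orbit runs from a repeller to an attractor. The basins of the attractors
are open and disjoint and cover the connected dense set `Ω`, so there is only one attractor, and
only one repeller by time reversal.

All slices strictly between the two heights are homeomorphic along the orbits, and a slice close to
the bottom is strictly star-shaped because the elliptic graph increases along rays. Hence every
such slice is connected and its boundary is a sphere, and the boundary of `Ω` is the suspension of
this sphere between the two CR singular points.
-/

open Set Filter Topology Metric Function
open scoped ContDiff

lemma tendsto_atTop_of_monotone_of_mapClusterPt {ι α : Type*} [LinearOrder ι] [LinearOrder α]
    [TopologicalSpace α] [OrderTopology α] {f : ι → α} {l : α}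
    (hf : Monotone f) (hl : MapClusterPt l atTop f) : Tendsto f atTop (𝓝 l) := by
  refine tendsto_order.2 ⟨fun a ha ↦ ?_, fun a ha ↦ Eventually.of_forall fun t ↦ ?_⟩
  · obtain ⟨t, ht⟩ := (hl.frequently (lt_mem_nhds ha)).exists
    exact (eventually_ge_atTop t).mono fun u hu ↦ ht.trans_le (hf hu)
  · by_contra! hta
    obtain ⟨u, hu, htu⟩ := ((hl.frequently (gt_mem_nhds (ha.trans_le hta))).and_eventually
      (eventually_ge_atTop t)).exists
    exact (hf htu).not_gt hu

/-! ### Strict Lyapunov functions of flows -/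

section Flow

variable {X : Type*} [TopologicalSpace X] {φ : Flow ℝ X} {h : X → ℝ} {p q x y : X} {c c' t : ℝ}
  {A : Set X}

/-- The rest points of a flow: the points which it leaves fixed at all times. -/
def restPoints (φ : Flow ℝ X) : Set X := {x | ∀ t, φ t x = x}

/-- The basin of attraction of `p`: the points whose forward orbit converges to `p`. -/
def basin (φ : Flow ℝ X) (p : X) : Set X := {x | Tendsto (φ · x) atTop (𝓝 p)}

/-- A strict Lyapunov function of a flow, with the sign convention that it increases along
orbits. -/
structure IsStrictLyapunov (φ : Flow ℝ X) (h : X → ℝ) : Prop where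
  continuous : Continuous h
  strictMono : ∀ x ∉ restPoints φ, StrictMono fun t ↦ h (φ t x)

/-- A rest point which is a strict local maximum of `h` and is isolated among the rest points.
The corresponding notion for minima is `IsIsolatedMax φ.reverse (-h)`. -/
def IsIsolatedMax (φ : Flow ℝ X) (h : X → ℝ) (p : X) : Prop :=
  p ∈ restPoints φ ∧ ∀ᶠ x in 𝓝[≠] p, h x < h p ∧ x ∉ restPoints φ

lemma flow_map_neg_map (φ : Flow ℝ X) (t : ℝ) (x : X) : φ (-t) (φ t x) = x := by
  rw [← φ.map_add, neg_add_cancel, φ.map_zero_apply]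

lemma map_mem_iff_of_isInvariant (hA : IsInvariant φ A) : φ t x ∈ A ↔ x ∈ A :=
  ⟨fun hx ↦ flow_map_neg_map φ t x ▸ hA (-t) hx, fun hx ↦ hA t hx⟩

lemma isInvariant_restPoints (φ : Flow ℝ X) : IsInvariant φ (restPoints φ) :=
  fun t _ hx ↦ (hx t).symm ▸ hx

lemma map_mem_restPoints : φ t x ∈ restPoints φ ↔ x ∈ restPoints φ :=
  map_mem_iff_of_isInvariant (isInvariant_restPoints φ)

lemma mem_restPoints_restrict (hA : IsInvariant φ A) {x : A} :
    x ∈ restPoints (φ.restrict hA) ↔ (x : X) ∈ restPoints φ :=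
  forall_congr' fun _ ↦ Subtype.ext_iff

lemma flow_reverse_reverse (φ : Flow ℝ X) : φ.reverse.reverse = φ := by
  ext t x
  simp only [Flow.reverse_apply, neg_neg]

lemma restPoints_reverse (φ : Flow ℝ X) : restPoints φ.reverse = restPoints φ := by
  ext x
  refine ⟨fun hx t ↦ ?_, fun hx t ↦ hx (-t)⟩
  simpa only [Flow.reverse_apply, neg_neg] using hx (-t)

lemma map_mem_basin : φ t x ∈ basin φ p ↔ x ∈ basin φ p := by
  refine map_mem_iff_of_isInvariant fun s y hy ↦ ?_
  simpa only [basin, mem_ofPred_eq, Function.comp_def, φ.map_add, id_eq] using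
    Tendsto.comp hy (tendsto_atTop_add_const_right atTop s tendsto_id)

namespace IsStrictLyapunov

lemma reverse (L : IsStrictLyapunov φ h) : IsStrictLyapunov φ.reverse (-h) where
  continuous := L.continuous.neg
  strictMono x hx s t hst := by
    rw [restPoints_reverse] at hx
    simpa only [Flow.reverse_apply, Pi.neg_apply, neg_lt_neg_iff] using
      L.strictMono x hx (neg_lt_neg hst)

lemma continuous_orbit (L : IsStrictLyapunov φ h) (x : X) : Continuous fun t ↦ h (φ t x) :=
  L.continuous.comp (by fun_prop)

lemma lt_map (L : IsStrictLyapunov φ h) (hx : x ∉ restPoints φ) (ht : 0 < t) :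
    h x < h (φ t x) := by
  simpa only [φ.map_zero_apply] using L.strictMono x hx ht

lemma le_map (L : IsStrictLyapunov φ h) (x : X) (ht : 0 ≤ t) : h x ≤ h (φ t x) := by
  by_cases hx : x ∈ restPoints φ
  · rw [hx t]
  · simpa only [φ.map_zero_apply] using (L.strictMono x hx).monotone ht

lemma lt_of_mem_basin (L : IsStrictLyapunov φ h) (hx : x ∉ restPoints φ) (hp : x ∈ basin φ p) :
    h x < h p := by
  have hlim : Tendsto (fun t ↦ h (φ t x)) atTop (𝓝 (h p)) := (L.continuous.tendsto p).comp hp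
  exact (L.lt_map hx one_pos).trans_le ((L.strictMono x hx).monotone.ge_of_tendsto hlim 1)

lemma tendsto_of_mapClusterPt (L : IsStrictLyapunov φ h) (hx : x ∉ restPoints φ)
    (hy : MapClusterPt y atTop (φ · x)) : Tendsto (fun t ↦ h (φ t x)) atTop (𝓝 (h y)) :=
  tendsto_atTop_of_monotone_of_mapClusterPt (L.strictMono x hx).monotone <|
    hy.continuousAt_comp (f := h) L.continuous.continuousAt

lemma map_lt_of_mapClusterPt (L : IsStrictLyapunov φ h) (hx : x ∉ restPoints φ)
    (hy : MapClusterPt y atTop (φ · x)) (t : ℝ) : h (φ t x) < h y :=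
  (L.strictMono x hx (lt_add_one t)).trans_le <|
    (L.strictMono x hx).monotone.ge_of_tendsto (L.tendsto_of_mapClusterPt hx hy) (t + 1)

-- The limit of `h` along the orbit of `x` is also the value of `h` along the orbit of `y`.
lemma mem_restPoints_of_mapClusterPt (L : IsStrictLyapunov φ h) (hx : x ∉ restPoints φ)
    (hy : MapClusterPt y atTop (φ · x)) : y ∈ restPoints φ := by
  by_contra hyC
  have hcluster : MapClusterPt (φ 1 y) atTop (φ · (φ 1 x)) := by
    simpa only [Function.comp_def, ← φ.map_add, add_comm] using
      hy.continuousAt_comp (f := φ 1) (φ.continuous_toFun 1).continuousAt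
  have hlim : Tendsto (fun t ↦ h (φ t (φ 1 x))) atTop (𝓝 (h y)) := by
    simpa only [Function.comp_def, φ.map_add, id_eq] using
      (L.tendsto_of_mapClusterPt hx hy).comp (tendsto_atTop_add_const_right atTop 1 tendsto_id)
  exact (L.lt_map hyC one_pos).ne <| tendsto_nhds_unique hlim <|
    L.tendsto_of_mapClusterPt (map_mem_restPoints.not.2 hx) hcluster

-- The orbit could only leave `K` through its frontier, where `h` is too small.
lemma map_mem_interior (L : IsStrictLyapunov φ h) {K : Set X} (hK : IsClosed K) {m : ℝ}
    (hm : ∀ y ∈ frontier K, h y ≤ m) (hxK : x ∈ interior K) (hxm : m < h x) (ht : 0 ≤ t) :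
    φ t x ∈ interior K := by
  have hpre : IsPreconnected ((φ · x) '' Ici 0) :=
    isPreconnected_Ici.image _ (by fun_prop : Continuous (φ · x)).continuousOn
  have hmeet : ((φ · x) '' Ici 0 ∩ interior K).Nonempty :=
    ⟨x, ⟨0, mem_Ici.2 le_rfl, φ.map_zero_apply x⟩, hxK⟩
  refine hpre.subset_left_of_subset_union isOpen_interior hK.isOpen_compl
    (disjoint_compl_right.mono_left interior_subset) ?_ hmeet (mem_image_of_mem (φ · x) ht)
  rintro _ ⟨s, hs, rfl⟩
  refine or_iff_not_imp_left.2 fun hint hmem ↦ ?_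
  exact (hxm.trans_le (L.le_map x hs)).not_ge (hm _ ⟨subset_closure hmem, hint⟩)

end IsStrictLyapunov

lemma IsIsolatedMax.exists_isCompact_nhds [CompactSpace X] [T2Space X]
    (hp : IsIsolatedMax φ h p) (hcont : Continuous h) :
    ∃ K ∈ 𝓝 p, IsCompact K ∧ K ∩ restPoints φ ⊆ {p} ∧ ∃ m < h p, ∀ x ∈ frontier K, h x ≤ m := by
  obtain ⟨K, ⟨hK, hKc⟩, hKs⟩ :=
    (closed_nhds_basis p).mem_iff.1 (eventually_nhdsWithin_iff.1 hp.2)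
  have hrest : K ∩ restPoints φ ⊆ {p} := fun x hx ↦ by
    by_contra hne
    exact (hKs hx.1 hne).2 hx.2
  refine ⟨K, hK, hKc.isCompact, hrest, ?_⟩
  obtain hempty | hne := (frontier K).eq_empty_or_nonempty
  · exact ⟨h p - 1, sub_one_lt _, by simp [hempty]⟩
  · obtain ⟨y, hy, hmax⟩ :=
      (isClosed_frontier (s := K)).isCompact.exists_isMaxOn hne hcont.continuousOn
    refine ⟨h y, (hKs (hKc.frontier_subset hy) ?_).1, fun x hx ↦ hmax hx⟩
    rintro rfl
    exact hy.2 (mem_interior_iff_mem_nhds.2 hK)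

lemma IsIsolatedMax.basin_mem_nhds [CompactSpace X] [T2Space X] (L : IsStrictLyapunov φ h)
    (hp : IsIsolatedMax φ h p) : basin φ p ∈ 𝓝 p := by
  obtain ⟨K, hK, hKc, hrest, m, hmp, hm⟩ := hp.exists_isCompact_nhds L.continuous
  filter_upwards [interior_mem_nhds.2 hK, L.continuous.continuousAt.eventually_const_lt hmp]
    with x hxK hxm
  have hstay (t : ℝ) (ht : 0 ≤ t) : φ t x ∈ K :=
    interior_subset (L.map_mem_interior hKc.isClosed hm hxK hxm ht)
  by_cases hx : x ∈ restPoints φ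
  · obtain rfl : x = p := hrest ⟨interior_subset hxK, hx⟩
    simpa only [basin, mem_ofPred_eq, hx _] using tendsto_const_nhds
  · refine tendsto_nhds_of_unique_mapClusterPt fun y hy ↦ hrest ⟨?_, ?_⟩
    · exact isClosed_iff_clusterPt.1 hKc.isClosed y <|
        hy.clusterPt.mono <| tendsto_principal.2 <| (eventually_ge_atTop 0).mono hstay
    · exact L.mem_restPoints_of_mapClusterPt hx hy

lemma IsIsolatedMax.isOpen_basin [CompactSpace X] [T2Space X] (L : IsStrictLyapunov φ h)
    (hp : IsIsolatedMax φ h p) : IsOpen (basin φ p) := by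
  refine isOpen_iff_mem_nhds.2 fun x hx ↦ ?_
  obtain ⟨t, ht⟩ := (hx.eventually (eventually_mem_nhds_iff.2 (hp.basin_mem_nhds L))).exists
  filter_upwards [(φ.continuous_toFun t).continuousAt.preimage_mem_nhds ht] with y hy
  exact map_mem_basin.1 hy

-- The Lyapunov function rules out cluster points of a forward orbit at isolated minima.
lemma IsStrictLyapunov.exists_mem_basin [CompactSpace X] [T2Space X] (L : IsStrictLyapunov φ h)
    (hrest : ∀ p ∈ restPoints φ, IsIsolatedMax φ h p ∨ IsIsolatedMax φ.reverse (-h) p)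
    (hx : x ∉ restPoints φ) : ∃ p, IsIsolatedMax φ h p ∧ x ∈ basin φ p := by
  obtain ⟨p, hp⟩ := exists_clusterPt_of_compactSpace (map (φ · x) atTop)
  have hp : MapClusterPt p atTop (φ · x) := hp
  have hpC := L.mem_restPoints_of_mapClusterPt hx hp
  obtain hmax | ⟨-, hmin⟩ := hrest p hpC
  · obtain ⟨t, ht⟩ := (hp.frequently (hmax.basin_mem_nhds L)).exists
    exact ⟨p, hmax, map_mem_basin.1 ht⟩
  · obtain ⟨t, ht⟩ := (hp.frequently (eventually_nhdsWithin_iff.1 hmin)).exists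
    have hne : φ t x ≠ p := fun heq ↦ hx (map_mem_restPoints.1 (heq ▸ hpC))
    exact absurd (L.map_lt_of_mapClusterPt hx hp t) (neg_lt_neg_iff.1 (ht hne).1).not_gt

lemma IsStrictLyapunov.subset_basin [CompactSpace X] [T2Space X] (L : IsStrictLyapunov φ h)
    (hrest : ∀ p ∈ restPoints φ, IsIsolatedMax φ h p ∨ IsIsolatedMax φ.reverse (-h) p)
    {O : Set X} (hO : IsPreconnected O) (hdense : Dense O) (hOC : Disjoint O (restPoints φ))
    (hp : IsIsolatedMax φ h p) : O ⊆ basin φ p := by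
  have hcover : O ⊆ basin φ p ∪ ⋃ q ∈ {q | IsIsolatedMax φ h q ∧ q ≠ p}, basin φ q := by
    intro x hx
    obtain ⟨q, hq, hxq⟩ := L.exists_mem_basin hrest (disjoint_left.1 hOC hx)
    obtain rfl | hqp := eq_or_ne q p
    · exact Or.inl hxq
    · exact Or.inr (mem_biUnion (show q ∈ {q | _} from ⟨hq, hqp⟩) hxq)
  have hdisj : Disjoint (basin φ p) (⋃ q ∈ {q | IsIsolatedMax φ h q ∧ q ≠ p}, basin φ q) := by
    simp only [disjoint_iUnion_right]
    exact fun q hq ↦ disjoint_left.2 fun x hxp hxq ↦ hq.2 (tendsto_nhds_unique hxq hxp)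
  refine hO.subset_left_of_subset_union (hp.isOpen_basin L)
    (isOpen_biUnion fun q hq ↦ hq.1.isOpen_basin L) hdisj hcover ?_
  exact hdense.inter_nhds_nonempty (hp.basin_mem_nhds L)

lemma IsStrictLyapunov.exists_unique_isIsolatedMax [CompactSpace X] [T2Space X]
    (L : IsStrictLyapunov φ h)
    (hrest : ∀ p ∈ restPoints φ, IsIsolatedMax φ h p ∨ IsIsolatedMax φ.reverse (-h) p)
    {O : Set X} (hO : IsConnected O) (hdense : Dense O) (hOC : Disjoint O (restPoints φ)) :
    ∃! p, IsIsolatedMax φ h p := by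
  obtain ⟨x, hx⟩ := hO.nonempty
  obtain ⟨p, hp, -⟩ := L.exists_mem_basin hrest (disjoint_left.1 hOC hx)
  refine ⟨p, hp, fun q hq ↦ ?_⟩
  have hsub {q : X} (hq : IsIsolatedMax φ h q) :=
    L.subset_basin hrest hO.isPreconnected hdense hOC hq
  exact tendsto_nhds_unique (hsub hq hx) (hsub hp hx)

/-- A north-south flow: a flow with exactly two rest points and a strict Lyapunov function,
along which all the other orbits travel from the south pole `p` to the north pole `q`. -/
structure IsNorthSouth (φ : Flow ℝ X) (h : X → ℝ) (p q : X) : Prop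
    extends IsStrictLyapunov φ h where
  lt : h p < h q
  restPoints_eq : restPoints φ = {p, q}
  mem_basin : ∀ x ∉ restPoints φ, x ∈ basin φ q
  mem_basin_reverse : ∀ x ∉ restPoints φ, x ∈ basin φ.reverse p

theorem IsStrictLyapunov.exists_isNorthSouth [CompactSpace X] [T2Space X]
    (L : IsStrictLyapunov φ h)
    (hrest : ∀ p ∈ restPoints φ, IsIsolatedMax φ h p ∨ IsIsolatedMax φ.reverse (-h) p)
    {O : Set X} (hO : IsConnected O) (hdense : Dense O) (hOC : Disjoint O (restPoints φ)) :
    ∃ p q, IsNorthSouth φ h p q := by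
  have hrest' : ∀ p ∈ restPoints φ.reverse,
      IsIsolatedMax φ.reverse (-h) p ∨ IsIsolatedMax φ.reverse.reverse (- -h) p := by
    intro p hp
    rw [restPoints_reverse] at hp
    simpa only [neg_neg, flow_reverse_reverse, or_comm] using hrest p hp
  have hOC' : Disjoint O (restPoints φ.reverse) := by rwa [restPoints_reverse]
  obtain ⟨q, hq, hq_unique⟩ := L.exists_unique_isIsolatedMax hrest hO hdense hOC
  obtain ⟨p, hp, hp_unique⟩ := L.reverse.exists_unique_isIsolatedMax hrest' hO hdense hOC'
  have hbasin (x : X) (hx : x ∉ restPoints φ) : x ∈ basin φ q := by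
    obtain ⟨q', hq', hxq'⟩ := L.exists_mem_basin hrest hx
    exact hq_unique q' hq' ▸ hxq'
  have hbasin' (x : X) (hx : x ∉ restPoints φ) : x ∈ basin φ.reverse p := by
    rw [← restPoints_reverse] at hx
    obtain ⟨p', hp', hxp'⟩ := L.reverse.exists_mem_basin hrest' hx
    exact hp_unique p' hp' ▸ hxp'
  refine ⟨p, q, L, ?_, ?_, hbasin, hbasin'⟩
  · obtain ⟨x, hx⟩ := hO.nonempty
    have hx := disjoint_left.1 hOC hx
    refine (neg_lt_neg_iff.1 ?_).trans (L.lt_of_mem_basin hx (hbasin x hx))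
    exact L.reverse.lt_of_mem_basin (by rwa [restPoints_reverse]) (hbasin' x hx)
  · refine Subset.antisymm (fun x hx ↦ ?_) (pair_subset ?_ hq.1)
    · exact (hrest x hx).elim (fun hmax ↦ Or.inr (hq_unique x hmax))
        fun hmin ↦ Or.inl (hp_unique x hmin)
    · exact restPoints_reverse φ ▸ hp.1

/-- The time at which the orbit of `x` reaches the level `h = c`, with a junk value if there is no
such time. -/
noncomputable def hittingTime (φ : Flow ℝ X) (h : X → ℝ) (c : ℝ) (x : X) : ℝ :=
  Classical.epsilon fun t ↦ h (φ t x) = c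

/-- The projection to the level `h = c` along the orbits of a flow. -/
noncomputable def levelProj (φ : Flow ℝ X) (h : X → ℝ) (c : ℝ) (x : X) : X :=
  φ (hittingTime φ h c x) x

lemma levelProj_mem_iff_of_isInvariant (hA : IsInvariant φ A) : levelProj φ h c x ∈ A ↔ x ∈ A :=
  map_mem_iff_of_isInvariant hA

namespace IsNorthSouth

lemma apply_mem_Ioo_iff (N : IsNorthSouth φ h p q) :
    h x ∈ Ioo (h p) (h q) ↔ x ∉ restPoints φ := by
  refine ⟨fun hx hxC ↦ ?_, fun hx ↦ ⟨neg_lt_neg_iff.1 ?_, ?_⟩⟩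
  · obtain rfl | rfl : x = p ∨ x = q := N.restPoints_eq.subset hxC
    exacts [hx.1.false, hx.2.false]
  · exact N.reverse.lt_of_mem_basin (by rwa [restPoints_reverse]) (N.mem_basin_reverse x hx)
  · exact N.lt_of_mem_basin hx (N.mem_basin x hx)

lemma notMem_restPoints (N : IsNorthSouth φ h p q) (hc : c ∈ Ioo (h p) (h q)) (hx : h x = c) :
    x ∉ restPoints φ :=
  N.apply_mem_Ioo_iff.1 (hx.symm ▸ hc)

lemma eq_of_mem_restPoints (N : IsNorthSouth φ h p q) (hx : x ∈ restPoints φ) (hxy : h x = h y) :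
    x = y := by
  have hy : y ∈ restPoints φ := by
    rwa [← not_not (a := _ ∈ _), ← N.apply_mem_Ioo_iff, ← hxy, N.apply_mem_Ioo_iff, not_not]
  obtain rfl | rfl : x = p ∨ x = q := N.restPoints_eq.subset hx <;>
    obtain rfl | rfl : y = _ ∨ y = _ := N.restPoints_eq.subset hy
  exacts [rfl, (N.lt.ne hxy).elim, (N.lt.ne' hxy).elim, rfl]

lemma mem_Icc (N : IsNorthSouth φ h p q) (x : X) : h x ∈ Icc (h p) (h q) := by
  by_cases hx : x ∈ restPoints φ
  · obtain rfl | rfl : x = p ∨ x = q := N.restPoints_eq.subset hx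
    exacts [left_mem_Icc.2 N.lt.le, right_mem_Icc.2 N.lt.le]
  · exact Ioo_subset_Icc_self (N.apply_mem_Ioo_iff.2 hx)

protected lemma restrict (N : IsNorthSouth φ h p q) (hA : IsInvariant φ A) (hp : p ∈ A)
    (hq : q ∈ A) : IsNorthSouth (φ.restrict hA) (fun x ↦ h x) ⟨p, hp⟩ ⟨q, hq⟩ := by
  refine ⟨⟨N.continuous.comp continuous_subtype_val, fun x hx ↦ ?_⟩, N.lt, ?_, fun x hx ↦ ?_,
    fun x hx ↦ ?_⟩
  · exact N.strictMono x ((mem_restPoints_restrict hA).not.1 hx)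
  · ext x
    simp only [mem_restPoints_restrict, N.restPoints_eq, mem_insert_iff, mem_singleton_iff,
      Subtype.ext_iff]
  · exact tendsto_subtype_rng.2 (N.mem_basin x ((mem_restPoints_restrict hA).not.1 hx))
  · exact tendsto_subtype_rng.2 (N.mem_basin_reverse x ((mem_restPoints_restrict hA).not.1 hx))

lemma exists_map_eq (N : IsNorthSouth φ h p q) (hc : c ∈ Ioo (h p) (h q))
    (hx : x ∉ restPoints φ) : ∃ t, h (φ t x) = c := by
  have hcont := N.continuous_orbit x
  have htop : Tendsto (fun t ↦ h (φ t x)) atTop (𝓝 (h q)) :=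
    (N.continuous.tendsto q).comp (N.mem_basin x hx)
  have hbot : Tendsto (fun t ↦ h (φ (-t) x)) atTop (𝓝 (h p)) :=
    (N.continuous.tendsto p).comp (N.mem_basin_reverse x hx)
  obtain ⟨t, ht⟩ := (htop.eventually (lt_mem_nhds hc.2)).exists
  obtain ⟨s, hs⟩ := (hbot.eventually (gt_mem_nhds hc.1)).exists
  exact mem_range_of_exists_le_of_exists_ge hcont ⟨-s, hs.le⟩ ⟨t, ht.le⟩

lemma apply_levelProj (N : IsNorthSouth φ h p q) (hc : c ∈ Ioo (h p) (h q))
    (hx : x ∉ restPoints φ) : h (levelProj φ h c x) = c :=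
  Classical.epsilon_spec (N.exists_map_eq hc hx)

lemma levelProj_eq_map (N : IsNorthSouth φ h p q) (hc : c ∈ Ioo (h p) (h q))
    (hx : x ∉ restPoints φ) (ht : h (φ t x) = c) : levelProj φ h c x = φ t x := by
  rw [levelProj, (N.strictMono x hx).injective ((N.apply_levelProj hc hx).trans ht.symm)]

lemma levelProj_map (N : IsNorthSouth φ h p q) (hc : c ∈ Ioo (h p) (h q))
    (hx : x ∉ restPoints φ) (t : ℝ) : levelProj φ h c (φ t x) = levelProj φ h c x := by
  have hx' : φ t x ∉ restPoints φ := map_mem_restPoints.not.2 hx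
  rw [levelProj, ← φ.map_add]
  refine (N.levelProj_eq_map hc hx ?_).symm
  rw [φ.map_add]
  exact N.apply_levelProj hc hx'

lemma levelProj_levelProj (N : IsNorthSouth φ h p q) (hc : c ∈ Ioo (h p) (h q))
    (hx : h x = c) (c' : ℝ) :
    levelProj φ h c (levelProj φ h c' x) = x := by
  have hxC : x ∉ restPoints φ := N.notMem_restPoints hc hx
  change levelProj φ h c (φ _ x) = x
  rw [N.levelProj_map hc hxC,
    N.levelProj_eq_map hc hxC (t := 0) (by rwa [φ.map_zero_apply]), φ.map_zero_apply]

lemma eq_of_levelProj_eq (N : IsNorthSouth φ h p q) (hy : y ∉ restPoints φ) (hxy : h x = h y)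
    (hproj : levelProj φ h c x = levelProj φ h c y) : x = y := by
  have hy' := N.apply_mem_Ioo_iff.2 hy
  rw [← N.levelProj_levelProj hy' hxy c, hproj, N.levelProj_levelProj hy' rfl c]

lemma continuousOn_hittingTime (N : IsNorthSouth φ h p q) (hc : c ∈ Ioo (h p) (h q)) :
    ContinuousOn (hittingTime φ h c) (restPoints φ)ᶜ := by
  have hcont (t : ℝ) : Continuous fun x ↦ h (φ t x) := N.continuous.comp (φ.continuous_toFun t)
  refine fun x hx ↦ tendsto_order.2 ⟨fun t ht ↦ ?_, fun t ht ↦ ?_⟩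
  · have hlt : h (φ t x) < c := (N.strictMono x hx ht).trans_eq (N.apply_levelProj hc hx)
    filter_upwards [nhdsWithin_le_nhds ((hcont t).continuousAt.eventually_lt_const hlt),
      self_mem_nhdsWithin] with y hy hyC
    exact (N.strictMono y hyC).lt_iff_lt.1 (hy.trans_eq (N.apply_levelProj hc hyC).symm)
  · have hlt : c < h (φ t x) := (N.apply_levelProj hc hx).symm.trans_lt (N.strictMono x hx ht)
    filter_upwards [nhdsWithin_le_nhds ((hcont t).continuousAt.eventually_const_lt hlt),
      self_mem_nhdsWithin] with y hy hyC
    exact (N.strictMono y hyC).lt_iff_lt.1 ((N.apply_levelProj hc hyC).trans_lt hy)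

lemma continuousOn_levelProj (N : IsNorthSouth φ h p q) (hc : c ∈ Ioo (h p) (h q)) :
    ContinuousOn (levelProj φ h c) (restPoints φ)ᶜ :=
  φ.cont'.comp_continuousOn ((N.continuousOn_hittingTime hc).prodMk continuousOn_id)

/-- The homeomorphism between two levels of a north-south flow along its orbits. -/
noncomputable def levelHomeomorph (N : IsNorthSouth φ h p q) (hc : c ∈ Ioo (h p) (h q))
    (hc' : c' ∈ Ioo (h p) (h q)) : {x // h x = c} ≃ₜ {x // h x = c'} where
  toFun x := ⟨levelProj φ h c' x, N.apply_levelProj hc' (N.notMem_restPoints hc x.2)⟩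
  invFun x := ⟨levelProj φ h c x, N.apply_levelProj hc (N.notMem_restPoints hc' x.2)⟩
  left_inv x := Subtype.ext (N.levelProj_levelProj hc x.2 c')
  right_inv x := Subtype.ext (N.levelProj_levelProj hc' x.2 c)
  continuous_toFun := ((N.continuousOn_levelProj hc').comp_continuous continuous_subtype_val
    fun x ↦ N.notMem_restPoints hc x.2).subtype_mk _
  continuous_invFun := ((N.continuousOn_levelProj hc).comp_continuous continuous_subtype_val
    fun x ↦ N.notMem_restPoints hc' x.2).subtype_mk _

end IsNorthSouth

end Flow

/-! ### Suspensions of spheres -/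

section Suspension

variable {E : Type*} [NormedAddCommGroup E] [NormedSpace ℝ E] {u u' : E} {c c' : ℝ}

/-- The point of the unit sphere of `E × ℝ` at height `c` in the direction of the unit vector
`u`. -/
noncomputable def polarPoint (u : E) (c : ℝ) : WithLp 2 (E × ℝ) :=
  WithLp.toLp 2 (√(1 - c ^ 2) • u, c)

lemma norm_polarPoint (hc : c ^ 2 ≤ 1) (hu : c ^ 2 < 1 → ‖u‖ = 1) : ‖polarPoint u c‖ = 1 := by
  have hsq : ‖polarPoint u c‖ ^ 2 = ‖√(1 - c ^ 2) • u‖ ^ 2 + ‖c‖ ^ 2 :=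
    WithLp.prod_norm_sq_eq_of_L2 _
  refine (sq_eq_sq₀ (norm_nonneg _) zero_le_one).1 ?_
  rw [hsq, norm_smul, mul_pow, Real.norm_eq_abs, Real.norm_eq_abs, sq_abs, sq_abs,
    Real.sq_sqrt (sub_nonneg.2 hc)]
  obtain hlt | heq := hc.lt_or_eq
  · rw [hu hlt]
    ring
  · rw [heq]
    ring

lemma polarPoint_eq_iff :
    polarPoint u c = polarPoint u' c' ↔ c = c' ∧ (c ^ 2 < 1 → u = u') := by
  simp only [polarPoint, (WithLp.toLp_injective 2).eq_iff, Prod.mk.injEq, and_comm (b := c = c')]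
  refine and_congr_right ?_
  rintro rfl
  obtain hlt | hle := lt_or_ge (c ^ 2) 1
  · simp only [smul_right_inj (Real.sqrt_pos.2 (sub_pos.2 hlt)).ne', hlt, forall_const]
  · simp only [Real.sqrt_eq_zero_of_nonpos (sub_nonpos.2 hle), zero_smul, hle.not_gt,
      IsEmpty.forall_iff]

lemma exists_polarPoint_eq {w : WithLp 2 (E × ℝ)} (hw : ‖w‖ = 1) :
    ∃ (u : E) (c : ℝ), c ^ 2 ≤ 1 ∧ (c ^ 2 < 1 → ‖u‖ = 1) ∧ polarPoint u c = w := by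
  have hsq : 1 - w.snd ^ 2 = ‖w.fst‖ ^ 2 := by
    have := WithLp.prod_norm_sq_eq_of_L2 w
    rw [hw, Real.norm_eq_abs, sq_abs] at this
    linarith
  have hsqrt : √(1 - w.snd ^ 2) = ‖w.fst‖ := by rw [hsq, Real.sqrt_sq (norm_nonneg _)]
  refine ⟨‖w.fst‖⁻¹ • w.fst, w.snd, by nlinarith, fun hlt ↦ ?_, ?_⟩
  · have hne : w.fst ≠ 0 := by
      intro h0
      rw [h0, norm_zero] at hsq
      linarith
    rw [norm_smul, norm_inv, norm_norm, inv_mul_cancel₀ (norm_ne_zero_iff.2 hne)]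
  · rw [polarPoint, hsqrt]
    obtain h0 | hne := eq_or_ne w.fst 0
    · rw [h0, smul_zero, smul_zero, ← h0]
      rfl
    · rw [smul_inv_smul₀ (norm_ne_zero_iff.2 hne)]
      rfl

variable {Y : Type*} [TopologicalSpace Y] {τ : Y → ℝ} {d : Y → E}

-- At the poles, where `d` may be discontinuous, its coefficient tends to zero.
lemma continuous_polarPoint (hτ : Continuous τ) (hτ1 : ∀ y, τ y ^ 2 ≤ 1) (hd1 : ∀ y, ‖d y‖ ≤ 1)
    (hd : ∀ y, τ y ^ 2 < 1 → ContinuousAt d y) : Continuous fun y ↦ polarPoint (d y) (τ y) := by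
  have hsqrt : Continuous fun y ↦ √(1 - τ y ^ 2) := by fun_prop
  refine (WithLp.prod_continuous_toLp 2 E ℝ).comp (Continuous.prodMk ?_ hτ)
  refine continuous_iff_continuousAt.2 fun y ↦ ?_
  obtain hlt | heq := (hτ1 y).lt_or_eq
  · exact hsqrt.continuousAt.smul (hd y hlt)
  · have h0 : √(1 - τ y ^ 2) = 0 := by rw [heq, sub_self, Real.sqrt_zero]
    rw [ContinuousAt, h0, zero_smul]
    refine squeeze_zero_norm (fun z ↦ ?_) (h0 ▸ hsqrt.tendsto y)
    rw [norm_smul, Real.norm_of_nonneg (Real.sqrt_nonneg _)]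
    exact mul_le_of_le_one_right (Real.sqrt_nonneg _) (hd1 z)

theorem nonempty_homeomorph_sphere_of_suspension [CompactSpace Y] (hτ : Continuous τ)
    (hτ1 : ∀ y, τ y ^ 2 ≤ 1) (hd : ∀ y, τ y ^ 2 < 1 → ContinuousAt d y)
    (hd_le : ∀ y, ‖d y‖ ≤ 1) (hd_eq : ∀ y, τ y ^ 2 < 1 → ‖d y‖ = 1)
    (hinj : ∀ y y', τ y = τ y' → (τ y ^ 2 < 1 → d y = d y') → y = y')
    (hsurj : ∀ c (u : E), c ^ 2 ≤ 1 → (c ^ 2 < 1 → ‖u‖ = 1) →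
      ∃ y, τ y = c ∧ (c ^ 2 < 1 → d y = u)) :
    Nonempty (Y ≃ₜ sphere (0 : WithLp 2 (E × ℝ)) 1) := by
  let f (y : Y) : sphere (0 : WithLp 2 (E × ℝ)) 1 :=
    ⟨polarPoint (d y) (τ y), mem_sphere_zero_iff_norm.2 (norm_polarPoint (hτ1 y) (hd_eq y))⟩
  have hf : Bijective f := by
    refine ⟨fun y y' hyy' ↦ ?_, fun ⟨w, hw⟩ ↦ ?_⟩
    · obtain ⟨hτ', hd'⟩ := polarPoint_eq_iff.1 (Subtype.ext_iff.1 hyy')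
      exact hinj y y' hτ' hd'
    · obtain ⟨u, c, hc, hu, rfl⟩ := exists_polarPoint_eq (mem_sphere_zero_iff_norm.1 hw)
      obtain ⟨y, rfl, hy⟩ := hsurj c u hc hu
      exact ⟨y, Subtype.ext (polarPoint_eq_iff.2 ⟨rfl, hy⟩)⟩
  exact ⟨Continuous.homeoOfEquivCompactToT2 (f := Equiv.ofBijective f hf)
    ((continuous_polarPoint hτ hτ1 hd_le hd).subtype_mk _)⟩

end Suspension

section NorthSouth

variable {Y E : Type*} [TopologicalSpace Y] [NormedAddCommGroup E] {φ : Flow ℝ Y} {h : Y → ℝ}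
  {p q : Y} {c c' : ℝ}

namespace IsNorthSouth

lemma comp_strictMono (N : IsNorthSouth φ h p q) {f : ℝ → ℝ} (hf : Continuous f)
    (hmono : StrictMono f) : IsNorthSouth φ (f ∘ h) p q where
  continuous := hf.comp N.continuous
  strictMono x hx := hmono.comp (N.strictMono x hx)
  lt := hmono N.lt
  restPoints_eq := N.restPoints_eq
  mem_basin := N.mem_basin
  mem_basin_reverse := N.mem_basin_reverse

open Classical in
/-- The longitude of a point: the image under `e` of its projection to the level `h = c`, and `0`
at the poles. -/
noncomputable def longitude (N : IsNorthSouth φ h p q) (hc : c ∈ Ioo (h p) (h q))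
    (e : {x // h x = c} ≃ₜ sphere (0 : E) 1) (x : Y) : E :=
  if hx : x ∈ restPoints φ then 0 else e ⟨levelProj φ h c x, N.apply_levelProj hc hx⟩

lemma longitude_of_notMem (N : IsNorthSouth φ h p q) (hc : c ∈ Ioo (h p) (h q))
    (e : {x // h x = c} ≃ₜ sphere (0 : E) 1) {x : Y} (hx : x ∉ restPoints φ) :
    N.longitude hc e x = e ⟨levelProj φ h c x, N.apply_levelProj hc hx⟩ :=
  dif_neg hx

lemma norm_longitude_le (N : IsNorthSouth φ h p q) (hc : c ∈ Ioo (h p) (h q))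
    (e : {x // h x = c} ≃ₜ sphere (0 : E) 1) (x : Y) : ‖N.longitude hc e x‖ ≤ 1 := by
  by_cases hx : x ∈ restPoints φ
  · simp only [longitude, hx, dif_pos, norm_zero, zero_le_one]
  · rw [N.longitude_of_notMem hc e hx, norm_eq_of_mem_sphere]

lemma continuousOn_longitude (N : IsNorthSouth φ h p q) (hc : c ∈ Ioo (h p) (h q))
    (e : {x // h x = c} ≃ₜ sphere (0 : E) 1) :
    ContinuousOn (N.longitude hc e) (restPoints φ)ᶜ := by
  rw [continuousOn_iff_continuous_domRestrict]
  have hproj := continuousOn_iff_continuous_domRestrict.1 (N.continuousOn_levelProj hc)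
  refine (continuous_subtype_val.comp <| e.continuous.comp <|
    hproj.subtype_mk fun x ↦ N.apply_levelProj hc x.2).congr fun x ↦ ?_
  exact (N.longitude_of_notMem hc e x.2).symm

lemma eq_of_longitude_eq (N : IsNorthSouth φ h p q) (hc : c ∈ Ioo (h p) (h q))
    (e : {x // h x = c} ≃ₜ sphere (0 : E) 1) {x y : Y} (hx : x ∉ restPoints φ)
    (hy : y ∉ restPoints φ) (hxy : h x = h y)
    (hlong : N.longitude hc e x = N.longitude hc e y) : x = y := by
  rw [N.longitude_of_notMem hc e hx, N.longitude_of_notMem hc e hy, Subtype.coe_inj,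
    e.injective.eq_iff] at hlong
  exact N.eq_of_levelProj_eq hy hxy (Subtype.ext_iff.1 hlong)

lemma exists_longitude_eq (N : IsNorthSouth φ h p q) (hc : c ∈ Ioo (h p) (h q))
    (e : {x // h x = c} ≃ₜ sphere (0 : E) 1) (hc' : c' ∈ Ioo (h p) (h q)) {u : E} (hu : ‖u‖ = 1) :
    ∃ x, h x = c' ∧ N.longitude hc e x = u := by
  obtain ⟨⟨x, hx⟩, hxu⟩ := e.surjective ⟨u, mem_sphere_zero_iff_norm.2 hu⟩
  have hx' := N.apply_levelProj hc' (N.notMem_restPoints hc hx)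
  refine ⟨levelProj φ h c' x, hx', ?_⟩
  simp only [N.longitude_of_notMem hc e (N.notMem_restPoints hc' hx'),
    N.levelProj_levelProj hc hx c', hxu]

lemma nonempty_homeomorph_sphere_of_normalized [CompactSpace Y] [NormedSpace ℝ E]
    (N : IsNorthSouth φ h p q) (hp : h p = -1) (hq : h q = 1) (hc : c ∈ Ioo (h p) (h q))
    (e : {x // h x = c} ≃ₜ sphere (0 : E) 1) :
    Nonempty (Y ≃ₜ sphere (0 : WithLp 2 (E × ℝ)) 1) := by
  have hIoo (a : ℝ) : a ^ 2 < 1 ↔ a ∈ Ioo (h p) (h q) := by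
    rw [sq_lt_one_iff_abs_lt_one, abs_lt, hp, hq, mem_Ioo]
  have hlt (x : Y) : h x ^ 2 < 1 ↔ x ∉ restPoints φ := (hIoo _).trans N.apply_mem_Ioo_iff
  have hopen : IsOpen (restPoints φ)ᶜ := by
    convert isOpen_lt (N.continuous.pow 2) continuous_const using 1
    exact ext fun x ↦ (hlt x).symm
  refine nonempty_homeomorph_sphere_of_suspension N.continuous (d := N.longitude hc e)
    (fun x ↦ ?_) (fun x hx ↦ ?_) (N.norm_longitude_le hc e) (fun x hx ↦ ?_) (fun x y hxy hd ↦ ?_)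
    fun a u ha hu ↦ ?_
  · rw [sq_le_one_iff_abs_le_one, abs_le, ← hp, ← hq]
    exact N.mem_Icc x
  · exact (N.continuousOn_longitude hc e).continuousAt (hopen.mem_nhds ((hlt x).1 hx))
  · rw [N.longitude_of_notMem hc e ((hlt x).1 hx), norm_eq_of_mem_sphere]
  · by_cases hx : x ∈ restPoints φ
    · exact N.eq_of_mem_restPoints hx hxy
    · exact N.eq_of_longitude_eq hc e hx ((hlt y).1 (hxy ▸ (hlt x).2 hx)) hxy (hd ((hlt x).2 hx))
  · obtain hlt | heq := ha.lt_or_eq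
    · obtain ⟨x, hx, hxu⟩ := N.exists_longitude_eq hc e ((hIoo a).1 hlt) (hu hlt)
      exact ⟨x, hx, fun _ ↦ hxu⟩
    · obtain rfl | rfl := sq_eq_one_iff.1 heq
      exacts [⟨q, hq, fun h ↦ (h.ne heq).elim⟩, ⟨p, hp, fun h ↦ (h.ne heq).elim⟩]

theorem nonempty_homeomorph_sphere [CompactSpace Y] [NormedSpace ℝ E]
    (N : IsNorthSouth φ h p q) (hc : c ∈ Ioo (h p) (h q))
    (e : {x // h x = c} ≃ₜ sphere (0 : E) 1) :
    Nonempty (Y ≃ₜ sphere (0 : WithLp 2 (E × ℝ)) 1) := by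
  have hpos : 0 < h q - h p := sub_pos.2 N.lt
  let f (a : ℝ) : ℝ := (a - h p) / (h q - h p) * 2 - 1
  have hmono : StrictMono f := fun a b hab ↦ by
    simp only [f]
    gcongr
  have hf : Continuous f := by fun_prop
  have hlevel : {x | f (h x) = f c} = {x | h x = c} := by simp only [hmono.injective.eq_iff]
  refine (N.comp_strictMono hf hmono).nonempty_homeomorph_sphere_of_normalized ?_ ?_
    ⟨hmono hc.1, hmono hc.2⟩ ((Homeomorph.setCongr hlevel).trans e)
  · simp only [f, comp_apply, sub_self, zero_div, zero_mul, zero_sub]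
  · simp only [f, comp_apply, div_self hpos.ne', one_mul]
    norm_num

end IsNorthSouth

end NorthSouth

/-! ### Star bodies -/

section StarBody

variable {H E : Type*} [NormedAddCommGroup H] [NormedSpace ℝ H] [NormedAddCommGroup E]
  [NormedSpace ℝ E] {U K : Set H} {x y z v : H}

/-- A compact set `K` which is strictly star-shaped about `x`: every half-open segment from `x`
towards a point of `K` lies in the open set `U ⊆ K`. -/
structure IsStarBody (x : H) (U K : Set H) : Prop where
  isCompact : IsCompact K
  isOpen : IsOpen U
  subset : U ⊆ K
  mem : x ∈ K
  openSegment_subset : ∀ z ∈ K, openSegment ℝ x z ⊆ U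

namespace IsStarBody

lemma mem_interior (S : IsStarBody x U K) : x ∈ U :=
  S.openSegment_subset x S.mem (by rw [openSegment_same]; exact mem_singleton x)

lemma isConnected (S : IsStarBody x U K) : IsConnected U :=
  (((starConvex_iff_openSegment_subset S.mem_interior).2 fun z hz ↦
    S.openSegment_subset z (S.subset hz)).isPathConnected S.mem_interior).isConnected

lemma subset_closure (S : IsStarBody x U K) : K ⊆ closure U := fun z hz ↦
  closure_mono (S.openSegment_subset z hz) <|
    segment_subset_closure_openSegment (right_mem_segment ℝ x z)

lemma sub_ne_zero (S : IsStarBody x U K) (hz : z ∉ U) : z - x ≠ 0 :=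
  sub_ne_zero_of_ne fun h ↦ hz (h ▸ S.mem_interior)

lemma eq_of_smul_sub_eq (S : IsStarBody x U K) (hy : y ∈ K \ U) (hz : z ∈ K \ U) {r : ℝ}
    (hr : 0 < r) (hyz : r • (y - x) = z - x) : y = z := by
  have one_le {y z : H} {r : ℝ} (hr : 0 < r) (hy : y ∈ K) (hz : z ∉ U)
      (hyz : r • (y - x) = z - x) : 1 ≤ r := by
    by_contra! hr1
    refine hz (S.openSegment_subset y hy ?_)
    rw [openSegment_eq_image']
    exact ⟨r, ⟨hr, hr1⟩, by simp only [hyz, add_sub_cancel]⟩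
  have hinv : 1 ≤ r⁻¹ := one_le (inv_pos.2 hr) hz.1 hy.2 (by rw [← hyz, inv_smul_smul₀ hr.ne'])
  have hr1 : r = 1 := le_antisymm ((one_le_inv₀ hr).1 hinv) (one_le hr hy.1 hz.2 hyz)
  rwa [hr1, one_smul, sub_left_inj] at hyz

-- The last point of `K` on the ray cannot lie in the open set `U`.
lemma exists_add_smul_mem_diff (S : IsStarBody x U K) (hv : v ≠ 0) :
    ∃ t > (0 : ℝ), x + t • v ∈ K \ U := by
  have hcont : Continuous fun t : ℝ ↦ x + t • v := by fun_prop
  have hclosed : Topology.IsClosedEmbedding fun t : ℝ ↦ x + t • v :=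
    (Homeomorph.addLeft x).isClosedEmbedding.comp (isClosedEmbedding_smul_left hv)
  obtain ⟨t, ht, hmax⟩ := (hclosed.isCompact_preimage S.isCompact).exists_isMaxOn
    ⟨0, by simpa using S.mem⟩ continuousOn_id
  have htU : x + t • v ∉ U := by
    intro htU
    have hev : ∀ᶠ s in 𝓝[>] t, x + s • v ∈ U :=
      nhdsWithin_le_nhds ((S.isOpen.preimage hcont).mem_nhds htU)
    obtain ⟨s, hs, hts⟩ := (hev.and self_mem_nhdsWithin).exists
    exact (hmax (S.subset hs)).not_gt hts
  have ht0 : t ≠ 0 := by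
    rintro rfl
    rw [zero_smul, add_zero] at htU
    exact htU S.mem_interior
  exact ⟨t, (hmax (a := 0) (by simpa using S.mem)).lt_of_ne' ht0, ht, htU⟩

/-- The radial projection of the boundary of a star body to the unit sphere of a model space. -/
noncomputable def direction (S : IsStarBody x U K) (L : H ≃L[ℝ] E) (z : ↥(K \ U)) :
    sphere (0 : E) 1 :=
  ⟨NormedSpace.normalize (L (z - x)), mem_sphere_zero_iff_norm.2 <|
    NormedSpace.norm_normalize_eq_one_iff.2 (L.map_ne_zero_iff.2 (S.sub_ne_zero z.2.2))⟩

lemma continuous_direction (S : IsStarBody x U K) (L : H ≃L[ℝ] E) :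
    Continuous (S.direction L) := by
  have hL : Continuous fun z : ↥(K \ U) ↦ L (z - x) := by fun_prop
  exact ((hL.norm.inv₀ fun z ↦ norm_ne_zero_iff.2 <|
    L.map_ne_zero_iff.2 (S.sub_ne_zero z.2.2)).smul hL).subtype_mk _

lemma bijective_direction (S : IsStarBody x U K) (L : H ≃L[ℝ] E) :
    Bijective (S.direction L) := by
  refine ⟨fun y z hyz ↦ ?_, fun ⟨u, hu⟩ ↦ ?_⟩
  · have hray : SameRay ℝ (L (y - x)) (L (z - x)) :=
      sameRay_iff_inv_norm_smul_eq.2 (Or.inr (Or.inr (Subtype.ext_iff.1 hyz)))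
    obtain ⟨r, hr, hreq⟩ := hray.exists_pos_left (L.map_ne_zero_iff.2 (S.sub_ne_zero y.2.2))
      (L.map_ne_zero_iff.2 (S.sub_ne_zero z.2.2))
    rw [← map_smul, L.injective.eq_iff] at hreq
    exact Subtype.ext (S.eq_of_smul_sub_eq y.2 z.2 hr hreq)
  · rw [mem_sphere_zero_iff_norm] at hu
    obtain ⟨t, ht, htmem⟩ := S.exists_add_smul_mem_diff (v := L.symm u)
      (L.symm.map_ne_zero_iff.2 (norm_ne_zero_iff.1 (hu ▸ one_ne_zero)))
    refine ⟨⟨_, htmem⟩, Subtype.ext ?_⟩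
    simp only [direction, add_sub_cancel_left, map_smul, L.apply_symm_apply,
      NormedSpace.normalize_smul_of_pos ht, NormedSpace.normalize_eq_self_of_norm_eq_one hu]

/-- The boundary of a star body is a sphere, by radial projection. -/
noncomputable def homeomorphSphere (S : IsStarBody x U K) (L : H ≃L[ℝ] E) :
    ↥(K \ U) ≃ₜ sphere (0 : E) 1 :=
  haveI : CompactSpace ↥(K \ U) := isCompact_iff_compactSpace.1 (S.isCompact.diff S.isOpen)
  Continuous.homeoOfEquivCompactToT2 (f := Equiv.ofBijective _ (S.bijective_direction L))
    (S.continuous_direction L)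

lemma isConnected_sdiff (S : IsStarBody x U K) (hH : 1 < Module.rank ℝ H) :
    IsConnected (K \ U) := by
  have := isConnected_iff_connectedSpace.1 (isConnected_sphere hH 0 zero_le_one)
  let e := S.homeomorphSphere (.refl ℝ H)
  exact isConnected_iff_connectedSpace.2 (e.symm.surjective.connectedSpace e.symm.continuous)

end IsStarBody

end StarBody

/-! ### Flows of bounded Lipschitz vector fields -/

section LipschitzFlow

open scoped NNReal

variable {E : Type*} [NormedAddCommGroup E] [NormedSpace ℝ E] {V : E → E} {K M a b : ℝ≥0}
  {f g : ℝ → E} {t : ℝ}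

lemma exists_isIntegralCurveOn_Ioo [CompleteSpace E] (hV : LipschitzWith K V)
    (hM : ∀ x, ‖V x‖ ≤ M) (x : E) (a : ℝ≥0) :
    ∃ γ : ℝ → E, γ 0 = x ∧ IsIntegralCurveOn γ (fun _ ↦ V) (Ioo (-a) a) := by
  have hPL : IsPicardLindelof (fun _ ↦ V) (⟨0, by simp⟩ : Icc (-(a : ℝ)) a) x (M * a) 0 M K :=
    .of_time_independent (fun y _ ↦ hM y) hV.lipschitzOnWith (by simp)
  obtain ⟨γ, hγ0, hγ⟩ := hPL.exists_eq_forall_mem_Icc_hasDerivWithinAt₀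
  exact ⟨γ, hγ0, fun t ht ↦ (hγ t (Ioo_subset_Icc_self ht)).mono Ioo_subset_Icc_self⟩

lemma eqOn_Ioo_of_isIntegralCurveOn (hV : LipschitzWith K V)
    (hf : IsIntegralCurveOn f (fun _ ↦ V) (Ioo (-a) a))
    (hg : IsIntegralCurveOn g (fun _ ↦ V) (Ioo (-b) b)) (hab : a ≤ b) (h0 : f 0 = g 0) :
    EqOn f g (Ioo (-a) a) := by
  rcases eq_or_ne a 0 with rfl | ha
  · simp
  have hsub : Ioo (-a : ℝ) a ⊆ Ioo (-b) b :=
    Ioo_subset_Ioo (by simpa using hab) (by simpa using hab)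
  exact ODE_solution_unique_of_mem_Ioo (v := fun _ ↦ V) (s := fun _ ↦ univ)
    (fun _ _ ↦ hV.lipschitzOnWith) (by simpa using pos_of_ne_zero ha)
    (fun t ht ↦ ⟨(hf t ht).hasDerivAt (isOpen_Ioo.mem_nhds ht), trivial⟩)
    (fun t ht ↦ ⟨(hg t (hsub ht)).hasDerivAt (isOpen_Ioo.mem_nhds (hsub ht)), trivial⟩) h0

lemma exists_isIntegralCurve [CompleteSpace E] (hV : LipschitzWith K V)
    (hM : ∀ x, ‖V x‖ ≤ M) (x : E) :
    ∃ γ : ℝ → E, γ 0 = x ∧ IsIntegralCurve γ (fun _ ↦ V) := by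
  choose γ hγ0 hγ using exists_isIntegralCurveOn_Ioo hV hM x
  have hmem {t : ℝ} {a : ℝ≥0} (h : ‖t‖₊ < a) : t ∈ Ioo (-a : ℝ) a := abs_lt.1 h
  refine ⟨fun t ↦ γ (‖t‖₊ + 1) t, hγ0 _, fun t ↦ ?_⟩
  have ht : ‖t‖₊ < ‖t‖₊ + 1 := lt_add_one _
  have heq : (fun u ↦ γ (‖u‖₊ + 1) u) =ᶠ[𝓝 t] γ (‖t‖₊ + 1) := by
    filter_upwards [isOpen_Ioo.mem_nhds (hmem ht)] with u hu
    rcases le_total ‖u‖₊ ‖t‖₊ with hut | hut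
    · exact eqOn_Ioo_of_isIntegralCurveOn hV (hγ _) (hγ _) (by gcongr) (by simp only [hγ0])
        (hmem (lt_add_one _))
    · exact (eqOn_Ioo_of_isIntegralCurveOn hV (hγ _) (hγ _) (by gcongr) (by simp only [hγ0])
        hu).symm
  exact ((hγ _ t (hmem ht)).hasDerivAt (isOpen_Ioo.mem_nhds (hmem ht))).congr_of_eventuallyEq heq

lemma dist_le_of_isIntegralCurve_of_nonneg (hV : LipschitzWith K V)
    (hf : IsIntegralCurve f (fun _ ↦ V)) (hg : IsIntegralCurve g (fun _ ↦ V)) (ht : 0 ≤ t) :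
    dist (f t) (g t) ≤ dist (f 0) (g 0) * Real.exp (K * t) := by
  simpa only [sub_zero] using dist_le_of_trajectories_ODE (v := fun _ ↦ V) (fun _ ↦ hV)
    hf.continuous.continuousOn (fun t _ ↦ (hf t).hasDerivWithinAt)
    hg.continuous.continuousOn (fun t _ ↦ (hg t).hasDerivWithinAt) le_rfl t ⟨ht, le_rfl⟩

lemma dist_le_of_isIntegralCurve (hV : LipschitzWith K V)
    (hf : IsIntegralCurve f (fun _ ↦ V)) (hg : IsIntegralCurve g (fun _ ↦ V)) (t : ℝ) :
    dist (f t) (g t) ≤ dist (f 0) (g 0) * Real.exp (K * |t|) := by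
  rcases le_total 0 t with ht | ht
  · simpa only [abs_of_nonneg ht] using dist_le_of_isIntegralCurve_of_nonneg hV hf hg ht
  · have reversed {f : ℝ → E} (hf : IsIntegralCurve f (fun _ ↦ V)) :
        IsIntegralCurve (fun t ↦ f (-t)) (fun _ ↦ -V) := fun t ↦ by
      simpa [Function.comp_def] using (hf (-t)).scomp t (hasDerivAt_neg t)
    simpa [abs_of_nonpos ht] using dist_le_of_isIntegralCurve_of_nonneg hV.neg
      (reversed hf) (reversed hg) (neg_nonneg.2 ht)

lemma continuous_uncurry_of_isIntegralCurve (hV : LipschitzWith K V) {γ : E → ℝ → E}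
    (hγ0 : ∀ x, γ x 0 = x) (hγ : ∀ x, IsIntegralCurve (γ x) (fun _ ↦ V)) :
    Continuous (fun p : ℝ × E ↦ γ p.2 p.1) := by
  refine continuous_iff_continuousAt.2 fun ⟨t₀, x₀⟩ ↦ tendsto_iff_dist_tendsto_zero.2 ?_
  have hbound (p : ℝ × E) : dist (γ p.2 p.1) (γ x₀ t₀) ≤
      dist p.2 x₀ * Real.exp (K * |p.1|) + dist (γ x₀ p.1) (γ x₀ t₀) := by
    have := dist_le_of_isIntegralCurve hV (hγ p.2) (hγ x₀) p.1
    rw [hγ0, hγ0] at this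
    exact (dist_triangle _ (γ x₀ p.1) _).trans (by gcongr)
  have hcont : Continuous fun p : ℝ × E ↦
      dist p.2 x₀ * Real.exp (K * |p.1|) + dist (γ x₀ p.1) (γ x₀ t₀) := by
    have := (hγ x₀).continuous
    fun_prop
  exact squeeze_zero (fun _ ↦ dist_nonneg) hbound
    (by simpa using hcont.tendsto (t₀, x₀))

theorem exists_flow_isIntegralCurve [CompleteSpace E] (hV : LipschitzWith K V)
    (hM : ∀ x, ‖V x‖ ≤ M) :
    ∃ φ : Flow ℝ E, ∀ x, IsIntegralCurve (fun t ↦ φ t x) (fun _ ↦ V) := by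
  choose γ hγ0 hγ using exists_isIntegralCurve hV hM
  have hadd (t u : ℝ) (x : E) : γ x (t + u) = γ (γ x u) t :=
    congrFun (ODE_solution_unique_univ (v := fun _ ↦ V) (s := fun _ ↦ univ) (t₀ := 0)
      (f := fun t ↦ γ x (t + u)) (fun _ ↦ hV.lipschitzOnWith)
      (fun t ↦ ⟨(hγ x (t + u)).comp_add_const t u, trivial⟩) (fun t ↦ ⟨hγ _ t, trivial⟩)
      (by simp [hγ0])) t
  exact ⟨⟨fun t x ↦ γ x t, continuous_uncurry_of_isIntegralCurve hV hγ0 hγ, hadd, hγ0⟩, hγ⟩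

lemma mem_restPoints_iff_of_isIntegralCurve (hV : LipschitzWith K V) {φ : Flow ℝ E}
    (hφ : ∀ x, IsIntegralCurve (fun t ↦ φ t x) (fun _ ↦ V)) {x : E} :
    x ∈ restPoints φ ↔ V x = 0 := by
  refine ⟨fun hx ↦ ?_, fun hx t ↦ ?_⟩
  · have hconst : IsIntegralCurve (fun _ ↦ x) (fun _ ↦ V) := by
      simpa only [(funext hx : (fun t ↦ φ t x) = fun _ ↦ x)] using hφ x
    exact (hconst 0).unique (hasDerivAt_const 0 x)
  · simpa using dist_le_of_isIntegralCurve hV (hφ x) (isIntegralCurve_const fun _ ↦ hx) t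

lemma eq_mul_exp_integral_of_hasDerivAt {f k : ℝ → ℝ} (hk : Continuous k)
    (hf : ∀ t, HasDerivAt f (k t * f t) t) (t : ℝ) :
    f t = f 0 * Real.exp (∫ u in (0 : ℝ)..t, k u) := by
  have hK (t) : HasDerivAt (fun t ↦ ∫ u in (0 : ℝ)..t, k u) (k t) t :=
    hk.integral_hasStrictDerivAt 0 t |>.hasDerivAt
  have hd (t) : HasDerivAt (fun t ↦ f t * Real.exp (-∫ u in (0 : ℝ)..t, k u)) 0 t :=
    ((hf t).mul (hK t).neg.exp).congr_deriv (by ring)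
  have hconst := is_const_of_deriv_eq_zero (fun t ↦ (hd t).differentiableAt)
    (fun t ↦ (hd t).deriv) t 0
  simp only [intervalIntegral.integral_same, neg_zero, Real.exp_zero, mul_one] at hconst
  rw [← hconst, mul_assoc, ← Real.exp_add, neg_add_cancel, Real.exp_zero, mul_one]

end LipschitzFlow

/-! ### Climbing inside a bounded domain -/

section ClimbingFlow

variable {E : Type*} [NormedAddCommGroup E] [NormedSpace ℝ E]

lemma exists_pos_map_eq_mul {φ : Flow ℝ E} {W : E → E} {f k : E → ℝ}
    (hφ : ∀ x, IsIntegralCurve (fun t ↦ φ t x) fun _ ↦ W) (hf : Differentiable ℝ f)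
    (hk : Continuous k) (hW : ∀ x, fderiv ℝ f x (W x) = k x * f x) (t : ℝ) (x : E) :
    ∃ c > 0, f (φ t x) = c * f x := by
  have hsol := eq_mul_exp_integral_of_hasDerivAt (f := fun t ↦ f (φ t x))
    (k := fun t ↦ k (φ t x)) (by fun_prop) (fun t ↦
      ((hf _).hasFDerivAt.comp_hasDerivAt t (hφ x t)).congr_deriv (hW _)) t
  rw [φ.map_zero_apply, mul_comm] at hsol
  exact ⟨_, Real.exp_pos _, hsol⟩

lemma exists_flow_cutoff_of_isBounded [FiniteDimensional ℝ E] {V : E → E} (hV : ContDiff ℝ 1 V)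
    {S : Set E} (hS : Bornology.IsBounded S) :
    ∃ (χ : E → ℝ) (φ : Flow ℝ E), Continuous χ ∧ (∀ x ∈ S, χ x = 1) ∧
      (∀ x, IsIntegralCurve (fun t ↦ φ t x) fun _ y ↦ χ y • V y) ∧
      ∀ x, x ∈ restPoints φ ↔ χ x • V x = 0 := by
  obtain ⟨R, hR0, hR⟩ := hS.subset_closedBall_lt 0 0
  let χ : ContDiffBump (0 : E) := ⟨R, R + 1, hR0, lt_add_one R⟩
  have hW : ContDiff ℝ 1 fun x ↦ χ x • V x := χ.contDiff.smul hV
  have hWc : HasCompactSupport fun x ↦ χ x • V x := χ.hasCompactSupport.smul_right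
  obtain ⟨K, hK⟩ := hW.lipschitzWith_of_hasCompactSupport hWc one_ne_zero
  obtain ⟨M, hM⟩ := hWc.exists_bound_of_continuous hW.continuous
  obtain ⟨φ, hφ⟩ := exists_flow_isIntegralCurve hK fun x ↦ (hM x).trans (Real.le_coe_toNNReal M)
  exact ⟨χ, φ, χ.continuous, fun x hx ↦ χ.one_of_mem_closedBall (hR hx), hφ,
    fun x ↦ mem_restPoints_iff_of_isIntegralCurve hK hφ⟩

variable {H : Type*} [NormedAddCommGroup H] [NormedSpace ℝ H] {Ω : Set (H × ℝ)}
  {ρ : H × ℝ → ℝ} {p : H × ℝ}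

/-- `ρ` is a `C²` defining function of `Ω`, negative on `Ω` and zero exactly on the frontier, where
it may have critical points. -/
structure IsDefiningFunction (ρ : H × ℝ → ℝ) (Ω : Set (H × ℝ)) : Prop where
  contDiff : ContDiff ℝ 2 ρ
  eq_setOf_neg : Ω = {p | ρ p < 0}
  frontier_eq : frontier Ω = {p | ρ p = 0}

/-- The differential of `ρ` at `p` vanishes on the leaf `H × {p.2}`. -/
def IsLeafCritical (ρ : H × ℝ → ℝ) (p : H × ℝ) : Prop := ∀ v : H, fderiv ℝ ρ p (v, 0) = 0

/-- The singular points of the boundary of `Ω` with defining function `ρ`, where it is tangent to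
the leaves `H × {c}`. -/
def singularSet (ρ : H × ℝ → ℝ) (Ω : Set (H × ℝ)) : Set (H × ℝ) :=
  {p | p ∈ frontier Ω ∧ IsLeafCritical ρ p}

namespace IsDefiningFunction

lemma mem_iff (D : IsDefiningFunction ρ Ω) : p ∈ Ω ↔ ρ p < 0 := by
  rw [D.eq_setOf_neg, mem_ofPred_eq]

lemma isOpen (D : IsDefiningFunction ρ Ω) : IsOpen Ω :=
  D.eq_setOf_neg ▸ isOpen_lt D.contDiff.continuous continuous_const

lemma mem_frontier_iff (D : IsDefiningFunction ρ Ω) : p ∈ frontier Ω ↔ ρ p = 0 := by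
  rw [D.frontier_eq, mem_ofPred_eq]

lemma mem_closure_iff (D : IsDefiningFunction ρ Ω) : p ∈ closure Ω ↔ ρ p ≤ 0 := by
  rw [closure_eq_self_union_frontier, mem_union, D.mem_iff, D.mem_frontier_iff, le_iff_lt_or_eq]

end IsDefiningFunction

variable [FiniteDimensional ℝ H]

/-- The gradient of `ρ` along the leaves, for the inner product which makes `Module.finBasis ℝ H`
orthonormal. -/
noncomputable def leafGrad (ρ : H × ℝ → ℝ) (p : H × ℝ) : H :=
  ∑ j, fderiv ℝ ρ p (Module.finBasis ℝ H j, 0) • Module.finBasis ℝ H j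

/-- A vector field which preserves the sign of `ρ` and never points downwards. It equals
`|∇ρ|² ∂ₛ - (∂ₛρ) ∇ρ`, with the gradient taken along the leaves, plus a term vanishing on the
boundary `ρ = 0` which makes it point upwards everywhere else. -/
noncomputable def climbField (ρ : H × ℝ → ℝ) (p : H × ℝ) : H × ℝ :=
  (-fderiv ℝ ρ p (0, 1) • leafGrad ρ p, fderiv ℝ ρ p (leafGrad ρ p, 0) + ρ p ^ 2)

lemma fderiv_leafGrad (ρ : H × ℝ → ℝ) (p : H × ℝ) :
    fderiv ℝ ρ p (leafGrad ρ p, 0) = ∑ j, fderiv ℝ ρ p (Module.finBasis ℝ H j, 0) ^ 2 := by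
  have : (leafGrad ρ p, (0 : ℝ)) = ContinuousLinearMap.inl ℝ H ℝ (leafGrad ρ p) := rfl
  rw [this, leafGrad]
  simp only [map_sum, map_smul, ContinuousLinearMap.inl_apply, smul_eq_mul, pow_two]

lemma fderiv_leafGrad_nonneg (ρ : H × ℝ → ℝ) (p : H × ℝ) :
    0 ≤ fderiv ℝ ρ p (leafGrad ρ p, 0) :=
  (fderiv_leafGrad ρ p).symm ▸ Finset.sum_nonneg fun _ _ ↦ sq_nonneg _

lemma fderiv_leafGrad_eq_zero_iff : fderiv ℝ ρ p (leafGrad ρ p, 0) = 0 ↔ IsLeafCritical ρ p := by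
  refine ⟨fun h v ↦ ?_, fun h ↦ h _⟩
  rw [fderiv_leafGrad, Finset.sum_eq_zero_iff_of_nonneg fun _ _ ↦ sq_nonneg _] at h
  have hzero : (fderiv ℝ ρ p).toLinearMap ∘ₗ LinearMap.inl ℝ H ℝ = 0 :=
    (Module.finBasis ℝ H).ext fun j ↦ pow_eq_zero_iff two_ne_zero |>.1 (h j (Finset.mem_univ j))
  exact LinearMap.congr_fun hzero v

lemma fderiv_climbField (ρ : H × ℝ → ℝ) (p : H × ℝ) :
    fderiv ℝ ρ p (climbField ρ p) = fderiv ℝ ρ p (0, 1) * ρ p * ρ p := by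
  have hsplit (v : H) (s : ℝ) : fderiv ℝ ρ p (v, s) =
      fderiv ℝ ρ p (v, 0) + s * fderiv ℝ ρ p (0, 1) := by
    rw [← smul_eq_mul, ← map_smul, ← map_add]
    simp
  have hsmul (a : ℝ) (v : H) : fderiv ℝ ρ p (a • v, 0) = a * fderiv ℝ ρ p (v, 0) := by
    rw [← smul_eq_mul, ← map_smul, Prod.smul_mk, smul_zero]
  rw [climbField, hsplit, hsmul]
  ring

lemma climbField_snd_nonneg (ρ : H × ℝ → ℝ) (p : H × ℝ) : 0 ≤ (climbField ρ p).2 :=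
  add_nonneg (fderiv_leafGrad_nonneg ρ p) (sq_nonneg _)

lemma climbField_snd_eq_zero_iff : (climbField ρ p).2 = 0 ↔ ρ p = 0 ∧ IsLeafCritical ρ p := by
  rw [climbField, add_eq_zero_iff_of_nonneg (fderiv_leafGrad_nonneg ρ p) (sq_nonneg _),
    fderiv_leafGrad_eq_zero_iff, pow_eq_zero_iff two_ne_zero, and_comm]

lemma climbField_eq_zero_iff : climbField ρ p = 0 ↔ ρ p = 0 ∧ IsLeafCritical ρ p := by
  refine ⟨fun h ↦ climbField_snd_eq_zero_iff.1 (congrArg Prod.snd h), fun h ↦ Prod.ext ?_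
    (climbField_snd_eq_zero_iff.2 h)⟩
  simp [climbField, leafGrad, h.2 _]

lemma contDiff_climbField (hρ : ContDiff ℝ 2 ρ) : ContDiff ℝ 1 (climbField ρ) := by
  have hd : ContDiff ℝ 1 (fderiv ℝ ρ) := hρ.fderiv_right (by norm_num)
  have hgrad : ContDiff ℝ 1 (leafGrad ρ) :=
    ContDiff.sum fun j _ ↦ (hd.clm_apply contDiff_const).smul contDiff_const
  exact ((hd.clm_apply contDiff_const).neg.smul hgrad).prodMk
    ((hd.clm_apply (hgrad.prodMk contDiff_const)).add ((hρ.of_le (by norm_num)).pow 2))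

theorem IsDefiningFunction.exists_climbingFlow (D : IsDefiningFunction ρ Ω)
    (hΩ : Bornology.IsBounded Ω) :
    ∃ φ : Flow ℝ (closure Ω), IsStrictLyapunov φ (fun x ↦ x.1.2) ∧
      restPoints φ = Subtype.val ⁻¹' singularSet ρ Ω ∧ IsInvariant φ (Subtype.val ⁻¹' Ω) := by
  obtain ⟨χ, Φ, hχ, hχ1, hΦ, hrest⟩ :=
    exists_flow_cutoff_of_isBounded (contDiff_climbField D.contDiff) hΩ.closure
  have hρ' := D.contDiff.continuous_fderiv two_ne_zero
  have hsign := exists_pos_map_eq_mul (k := fun x ↦ χ x * (fderiv ℝ ρ x (0, 1) * ρ x)) hΦ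
    (D.contDiff.differentiable two_ne_zero)
    (hχ.mul ((hρ'.clm_apply continuous_const).mul D.contDiff.continuous))
    fun x ↦ by rw [map_smul, fderiv_climbField, smul_eq_mul, mul_assoc (χ x)]
  have hcl : IsInvariant Φ (closure Ω) := fun t x hx ↦ by
    obtain ⟨c, hc, heq⟩ := hsign t x
    exact D.mem_closure_iff.2 (heq ▸ mul_nonpos_of_nonneg_of_nonpos hc.le (D.mem_closure_iff.1 hx))
  have hrest' {x} (hx : x ∈ closure Ω) : x ∈ restPoints Φ ↔ ρ x = 0 ∧ IsLeafCritical ρ x := by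
    rw [hrest, hχ1 x hx, one_smul, climbField_eq_zero_iff]
  refine ⟨Φ.restrict hcl, ⟨by fun_prop, fun x hx ↦ strictMono_of_deriv_pos fun t ↦ ?_⟩, ?_, ?_⟩
  · have hxt : Φ t x ∈ closure Ω := hcl t x.2
    have hderiv : HasDerivAt (fun t ↦ (Φ t x).2) (climbField ρ (Φ t x)).2 t :=
      (hasFDerivAt_snd.comp_hasDerivAt t (hΦ x t)).congr_deriv (by simp [hχ1 _ hxt])
    refine lt_of_lt_of_eq ((climbField_snd_nonneg _ _).lt_of_ne' ?_) hderiv.deriv.symm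
    rwa [Ne, climbField_snd_eq_zero_iff, ← hrest' hxt, map_mem_restPoints,
      ← mem_restPoints_restrict hcl]
  · ext x
    rw [mem_restPoints_restrict, hrest' x.2, ← D.mem_frontier_iff]
    rfl
  · intro t x hx
    obtain ⟨c, hc, heq⟩ := hsign t x
    exact D.mem_iff.2 (heq ▸ mul_neg_of_pos_of_neg hc (D.mem_iff.1 hx))

end ClimbingFlow

/-! ### Radial caps -/

section RadialCap

/-- The slice of `A` at height `c`. -/
def leafSlice {X : Type*} (A : Set (X × ℝ)) (c : ℝ) : Set X := {z | (z, c) ∈ A}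

lemma isCompact_leafSlice {X : Type*} [TopologicalSpace X] {A : Set (X × ℝ)} (hA : IsCompact A)
    (c : ℝ) : IsCompact (leafSlice A c) := by
  have himage : leafSlice A c = Prod.fst '' (A ∩ Prod.snd ⁻¹' {c}) := by
    ext z
    simp [leafSlice]
  rw [himage]
  exact (hA.inter_right (isClosed_singleton.preimage continuous_snd)).image continuous_fst

variable {H : Type*} [NormedAddCommGroup H] [NormedSpace ℝ H] {Ω : Set (H × ℝ)} {p x : H × ℝ}
  {σ r : ℝ} {q : H → ℝ} {z : H}

/-- Near `p`, the set `Ω` lies strictly on one side (above if `σ = 1`, below if `σ = -1`) of a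
graph over the leaf of `p` which moves away from that leaf along every ray. The norm of `H × ℝ` is
the maximum norm, so that `ball p r` is a cylinder. -/
structure IsRadialGraph (Ω : Set (H × ℝ)) (p : H × ℝ) (σ : ℝ) (q : H → ℝ) (r : ℝ) : Prop where
  sign : σ = 1 ∨ σ = -1
  continuous : Continuous q
  map_zero : q 0 = 0
  strictMonoOn : ∀ z ≠ 0, ‖z‖ < r → StrictMonoOn (fun t : ℝ ↦ q (t • z)) (Icc 0 1)
  pos : 0 < r
  mem_iff : ∀ x ∈ ball p r, x ∈ Ω ↔ q (x.1 - p.1) < σ * (x.2 - p.2)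

/-- `p` is a tip of `Ω`: near `p` the boundary of `Ω` is a radial graph. -/
def IsRadialCap (Ω : Set (H × ℝ)) (p : H × ℝ) : Prop := ∃ σ q r, IsRadialGraph Ω p σ q r

namespace IsRadialGraph

lemma mem_closure_iff (G : IsRadialGraph Ω p σ q r) (hx : x ∈ ball p r) :
    x ∈ closure Ω ↔ q (x.1 - p.1) ≤ σ * (x.2 - p.2) := by
  have hq := G.continuous
  refine ⟨fun hxΩ ↦ ?_, fun hle ↦ ?_⟩
  · have hsub : ball p r ∩ Ω ⊆ {y | q (y.1 - p.1) < σ * (y.2 - p.2)} :=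
      fun y hy ↦ (G.mem_iff y hy.1).1 hy.2
    exact closure_lt_subset_le (by fun_prop) (by fun_prop)
      (closure_mono hsub (isOpen_ball.inter_closure ⟨hx, hxΩ⟩))
  · have htendsto : Tendsto (fun δ : ℝ ↦ (x.1, x.2 + σ * δ)) (𝓝[>] 0) (𝓝 x) := by
      have hcont : Continuous fun δ : ℝ ↦ (x.1, x.2 + σ * δ) := by fun_prop
      simpa using (hcont.tendsto 0).mono_left nhdsWithin_le_nhds
    refine mem_closure_of_tendsto htendsto ?_
    filter_upwards [htendsto.eventually (isOpen_ball.mem_nhds hx), self_mem_nhdsWithin]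
      with δ hδ hδ0
    rw [G.mem_iff _ hδ]
    have : σ * (x.2 + σ * δ - p.2) = σ * (x.2 - p.2) + δ := by
      rcases G.sign with rfl | rfl <;> ring
    exact this ▸ lt_add_of_le_of_pos hle hδ0

lemma apply_pos (G : IsRadialGraph Ω p σ q r) (hz : z ≠ 0) (hzr : ‖z‖ < r) : 0 < q z := by
  simpa [G.map_zero] using
    G.strictMonoOn z hz hzr (left_mem_Icc.2 zero_le_one) (right_mem_Icc.2 zero_le_one) one_pos

lemma pos_of_mem_closure (G : IsRadialGraph Ω p σ q r) (hx : x ∈ ball p r) (hxp : x ≠ p)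
    (hxΩ : x ∈ closure Ω) : 0 < σ * (x.2 - p.2) := by
  have hle := (G.mem_closure_iff hx).1 hxΩ
  by_cases hz : x.1 - p.1 = 0
  · rw [hz, G.map_zero] at hle
    refine hle.lt_of_ne' (mul_ne_zero ?_ fun h ↦
      hxp (Prod.ext (sub_eq_zero.1 hz) (sub_eq_zero.1 h)))
    rcases G.sign with rfl | rfl <;> norm_num
  · exact (G.apply_pos hz ((norm_fst_le (x - p)).trans_lt (mem_ball_iff_norm.1 hx))).trans_le hle

-- Shrinking `x` towards the axis through `p` leads into `Ω` without changing the height.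
lemma frequently_snd_eq (G : IsRadialGraph Ω p σ q r) (hx : x ∈ ball p r) (hxp : x ≠ p)
    (hΩ : IsOpen Ω) (hxΩ : x ∈ frontier Ω) : ∃ᶠ y in 𝓝[≠] x, y ∈ closure Ω ∧ y.2 = x.2 := by
  have hle := (G.mem_closure_iff hx).1 (frontier_subset_closure hxΩ)
  have hz : x.1 - p.1 ≠ 0 := fun hz ↦ by
    refine (hΩ.frontier_eq ▸ hxΩ).2 ((G.mem_iff x hx).2 ?_)
    rw [hz, G.map_zero]
    exact G.pos_of_mem_closure hx hxp (frontier_subset_closure hxΩ)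
  let y : ℝ → H × ℝ := fun t ↦ (p.1 + t • (x.1 - p.1), x.2)
  have hy : Tendsto y (𝓝[<] 1) (𝓝[≠] x) := by
    have hcont : Continuous y := by fun_prop
    have hy1 : y 1 = x := by simp [y]
    refine tendsto_nhdsWithin_iff.2 ⟨hy1 ▸ hcont.continuousWithinAt, ?_⟩
    filter_upwards [self_mem_nhdsWithin] with t ht hyt
    refine ht.ne (smul_left_injective ℝ hz ?_)
    simpa [y, eq_sub_iff_add_eq'] using congrArg Prod.fst hyt
  refine hy.frequently (Eventually.frequently ?_)
  have hball := (hy.mono_right nhdsWithin_le_nhds).eventually (isOpen_ball.mem_nhds hx)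
  filter_upwards [hball, Ioo_mem_nhdsLT one_pos] with t ht ht01
  have hlt : q (t • (x.1 - p.1)) < q (x.1 - p.1) := by
    simpa using G.strictMonoOn _ hz ((norm_fst_le (x - p)).trans_lt (mem_ball_iff_norm.1 hx))
      ⟨ht01.1.le, ht01.2.le⟩ (right_mem_Icc.2 zero_le_one) ht01.2
  refine ⟨(G.mem_closure_iff ht).2 ?_, rfl⟩
  simpa [y] using hlt.le.trans hle

lemma isStarBody_leafSlice (G : IsRadialGraph Ω p 1 q r) (hΩ : IsOpen Ω)
    (hcpt : IsCompact (closure Ω)) {c : ℝ} (hc : c ∈ Ioo p.2 (p.2 + r))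
    (hcr : leafSlice (closure Ω) c ⊆ ball p.1 r) :
    IsStarBody p.1 (leafSlice Ω c) (leafSlice (closure Ω) c) := by
  have hball {z : H} (hz : z ∈ ball p.1 r) : (z, c) ∈ ball p r := by
    rw [← ball_prod_same]
    exact ⟨hz, by rw [Real.ball_eq_Ioo]; exact ⟨by linarith [hc.1, G.pos], hc.2⟩⟩
  have hmem {z : H} (hz : z ∈ ball p.1 r) (hlt : q (z - p.1) < c - p.2) : z ∈ leafSlice Ω c :=
    (G.mem_iff _ (hball hz)).2 (by simpa using hlt)
  have hp : p.1 ∈ leafSlice Ω c := hmem (mem_ball_self G.pos) (by simpa [G.map_zero] using hc.1)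
  refine ⟨isCompact_leafSlice hcpt c, hΩ.preimage (by fun_prop), fun z hz ↦ subset_closure hz,
    subset_closure hp, ?_⟩
  rintro z hz - ⟨a, b, ha, hb, hab, rfl⟩
  obtain rfl | hzp := eq_or_ne z p.1
  · rwa [← add_smul, hab, one_smul]
  have hle : q (z - p.1) ≤ c - p.2 := by
    simpa using (G.mem_closure_iff (hball (hcr hz))).1 hz
  have hsub : a • p.1 + b • z - p.1 = b • (z - p.1) := by
    rw [eq_sub_of_add_eq hab]; module
  refine hmem ?_ ((hsub ▸ ?_ : _ < _).trans_le hle)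
  · exact convex_ball p.1 r (mem_ball_self G.pos) (hcr hz) ha.le hb.le hab
  · simpa using G.strictMonoOn _ (sub_ne_zero.2 hzp) (mem_ball_iff_norm.1 (hcr hz))
      ⟨hb.le, by linarith⟩ (right_mem_Icc.2 zero_le_one) (by linarith)

end IsRadialGraph

lemma IsRadialCap.eventually_not_isRadialCap (hp : IsRadialCap Ω p) (hΩ : IsOpen Ω) :
    ∀ᶠ x in 𝓝[≠] p, x ∈ frontier Ω → ¬ IsRadialCap Ω x := by
  obtain ⟨σ, q, r, G⟩ := hp
  filter_upwards [mem_nhdsWithin_of_mem_nhds (ball_mem_nhds p G.pos), self_mem_nhdsWithin]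
    with x hx hxp hxΩ ⟨σ', q', r', G'⟩
  have hx' : ∀ᶠ y in 𝓝[≠] x, y ∈ ball x r' := mem_nhdsWithin_of_mem_nhds (ball_mem_nhds x G'.pos)
  obtain ⟨y, ⟨hyΩ, hyx⟩, hy, hne⟩ := ((G.frequently_snd_eq hx hxp hΩ hxΩ).and_eventually
    (hx'.and self_mem_nhdsWithin)).exists
  simpa [hyx] using G'.pos_of_mem_closure hy hne hyΩ

end RadialCap

section Elliptic

variable {H : Type*} [NormedAddCommGroup H] [NormedSpace ℝ H]

lemma isLittleO_fderiv_of_iteratedFDeriv_two_eq_zero {F : Type*} [NormedAddCommGroup F]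
    [NormedSpace ℝ F] {f : H → F} (hf : ContDiff ℝ 2 f) (h1 : fderiv ℝ f 0 = 0)
    (h2 : iteratedFDeriv ℝ 2 f 0 = 0) : fderiv ℝ f =o[𝓝 0] fun z ↦ z := by
  have hzero : fderiv ℝ (fderiv ℝ f) 0 = 0 := by
    ext u v
    simpa [h2] using (iteratedFDeriv_two_apply (𝕜 := ℝ) f 0 ![u, v]).symm
  have hdiff : DifferentiableAt ℝ (fderiv ℝ f) 0 :=
    (hf.fderiv_right (m := 1) (by norm_num)).differentiable one_ne_zero 0
  simpa [h1, hzero] using hasFDerivAt_iff_isLittleO.1 hdiff.hasFDerivAt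

lemma exists_strictMonoOn_ray_add {Q E : H → ℝ} {c : ℝ} (hc : 0 < c)
    (hQ : ∀ (t : ℝ) z, Q (t • z) = t ^ 2 * Q z) (hcQ : ∀ z, c * ‖z‖ ^ 2 ≤ Q z)
    (hE : Differentiable ℝ E) (hE' : fderiv ℝ E =o[𝓝 0] fun z ↦ z) :
    ∃ r > 0, ∀ z ≠ 0, ‖z‖ < r →
      StrictMonoOn (fun t : ℝ ↦ Q (t • z) + E (t • z)) (Icc 0 1) := by
  obtain ⟨r, hr, hrE⟩ := Metric.eventually_nhds_iff_ball.1 (hE'.def hc)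
  refine ⟨r, hr, fun z hz hzr ↦ ?_⟩
  have hderiv (t : ℝ) : HasDerivAt (fun t : ℝ ↦ Q (t • z) + E (t • z))
      (2 * t * Q z + fderiv ℝ E (t • z) z) t := by
    simp only [hQ]
    refine (((hasDerivAt_pow 2 t).mul_const (Q z)).congr_deriv (by simp)).add ?_
    exact ((hE _).hasFDerivAt.comp_hasDerivAt t ((hasDerivAt_id t).smul_const z)).congr_deriv
      (by simp)
  refine strictMonoOn_of_deriv_pos (convex_Icc 0 1)
    (fun t _ ↦ (hderiv t).continuousAt.continuousWithinAt) fun t ht ↦ ?_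
  rw [interior_Icc] at ht
  have hnorm : ‖t • z‖ = t * ‖z‖ := by rw [norm_smul, Real.norm_of_nonneg ht.1.le]
  have hlt : ‖t • z‖ < r := by nlinarith [norm_nonneg z, ht.2]
  have hbound : |fderiv ℝ E (t • z) z| ≤ t * (c * ‖z‖ ^ 2) := calc
    |fderiv ℝ E (t • z) z| ≤ ‖fderiv ℝ E (t • z)‖ * ‖z‖ := (fderiv ℝ E (t • z)).le_opNorm z
    _ ≤ c * ‖t • z‖ * ‖z‖ := by gcongr; exact hrE _ (mem_ball_zero_iff.2 hlt)
    _ = t * (c * ‖z‖ ^ 2) := by rw [hnorm]; ring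
  have hpos : 0 < t * (c * ‖z‖ ^ 2) := by have := norm_pos_iff.2 hz; have := ht.1; positivity
  have hQz : t * (c * ‖z‖ ^ 2) ≤ t * Q z := mul_le_mul_of_nonneg_left (hcQ z) ht.1.le
  rw [(hderiv t).deriv]
  linarith [neg_abs_le (fderiv ℝ E (t • z) z)]

variable {n : ℕ} {lam : Fin n → ℝ}

lemma ellipticQ_smul (lam : Fin n → ℝ) (t : ℝ) (z : Fin n → ℂ) :
    EllipticQ n lam (t • z) = t ^ 2 * EllipticQ n lam z := by
  rw [EllipticQ, EllipticQ, Finset.mul_sum]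
  refine Finset.sum_congr rfl fun j _ ↦ ?_
  rw [Pi.smul_apply, smul_pow, Complex.smul_re, norm_smul, mul_pow, Real.norm_eq_abs, sq_abs,
    smul_eq_mul]
  ring

lemma exists_pos_mul_sq_norm_le_ellipticQ (hlam : ∀ j, 0 ≤ lam j ∧ lam j < 1 / 2) :
    ∃ c > 0, ∀ z, c * ‖z‖ ^ 2 ≤ EllipticQ n lam z := by
  obtain ⟨c, hc, hclam⟩ := Pi.exists_forall_pos_add_lt (x := fun j ↦ 2 * lam j) (y := fun _ ↦ 1)
    fun j ↦ by linarith [(hlam j).2]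
  have hterm (z : Fin n → ℂ) (j : Fin n) :
      c * ‖z j‖ ^ 2 ≤ ‖z j‖ ^ 2 + 2 * lam j * (z j ^ 2).re := by
    have hre : -‖z j‖ ^ 2 ≤ (z j ^ 2).re := by
      rw [← norm_pow]
      exact neg_le_of_abs_le (Complex.abs_re_le_norm _)
    nlinarith [(hlam j).1, hclam j, sq_nonneg ‖z j‖]
  have hnorm (z : Fin n → ℂ) : ‖z‖ ^ 2 ≤ ∑ j, ‖z j‖ ^ 2 := by
    rw [← Real.le_sqrt (norm_nonneg z) (Finset.sum_nonneg fun _ _ ↦ by positivity),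
      pi_norm_le_iff_of_nonneg (Real.sqrt_nonneg _)]
    exact fun j ↦ Real.le_sqrt_of_sq_le <|
      Finset.single_le_sum (f := fun j ↦ ‖z j‖ ^ 2) (fun j _ ↦ by positivity) (Finset.mem_univ j)
  refine ⟨c, hc, fun z ↦ (mul_le_mul_of_nonneg_left (hnorm z) hc.le).trans ?_⟩
  rw [Finset.mul_sum]
  exact Finset.sum_le_sum fun j _ ↦ hterm z j

theorem NondegElliptic.isRadialCap {Ω : Set ((Fin n → ℂ) × ℝ)} {p : (Fin n → ℂ) × ℝ}
    (hp : NondegElliptic n Ω p) : IsRadialCap Ω p := by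
  obtain ⟨lam, σ, E, r, hlam, hσ, hr, hE, hE0, hE1, hE2, hmem⟩ := hp
  obtain ⟨c, hc, hcQ⟩ := exists_pos_mul_sq_norm_le_ellipticQ hlam
  obtain ⟨r', hr', hmono⟩ := exists_strictMonoOn_ray_add hc (ellipticQ_smul lam) hcQ
    (hE.differentiable (by simp)) (isLittleO_fderiv_of_iteratedFDeriv_two_eq_zero
      (hE.of_le (by norm_cast)) hE1 hE2)
  refine ⟨σ, fun z ↦ EllipticQ n lam z + E z, min r r', hσ, ?_, ?_,
    fun z hz hzr ↦ hmono z hz (hzr.trans_le (min_le_right _ _)), lt_min hr hr', fun x hx ↦ ?_⟩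
  · exact (by unfold EllipticQ; fun_prop : Continuous (EllipticQ n lam)).add hE.continuous
  · simp [EllipticQ, hE0]
  · rw [← ball_prod_same] at hx
    have hσ1 : |σ| = 1 := by rcases hσ with rfl | rfl <;> norm_num
    have hσσ : σ * (σ * (x.2 - p.2)) = x.2 - p.2 := by rcases hσ with rfl | rfl <;> ring
    have h := hmem (x.1 - p.1) (σ * (x.2 - p.2))
      ((mem_ball_iff_norm.1 hx.1).trans_le (min_le_left _ _))
      (by rw [abs_mul, hσ1, one_mul]; exact (mem_ball_iff_norm.1 hx.2).trans_le (min_le_left _ _))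
    rwa [hσσ, add_sub_cancel, add_sub_cancel] at h

end Elliptic

/-! ### Slices of a domain with a north-south flow -/

section ConnectedPair

variable {X Y : Type*} [TopologicalSpace X] [TopologicalSpace Y] {K U : Set X} {K' U' : Set Y}

lemma isConnected_of_homeomorph (hU : IsConnected U) (e : K ≃ₜ K') (hUK : U ⊆ K) (hUK' : U' ⊆ K')
    (he : ∀ z, (e z : Y) ∈ U' ↔ (z : X) ∈ U) : IsConnected U' := by
  have := isConnected_iff_connectedSpace.1 hU
  have hrange : U' = range fun z : U ↦ (e ⟨z, hUK z.2⟩ : Y) := by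
    refine Subset.antisymm (fun y hy ↦ ?_) (range_subset_iff.2 fun z ↦ (he _).2 z.2)
    have hmem := he (e.symm ⟨y, hUK' hy⟩)
    rw [e.apply_symm_apply] at hmem
    exact ⟨⟨_, hmem.1 hy⟩, by simp⟩
  rw [hrange]
  exact isConnected_range (by fun_prop)

lemma subset_closure_of_homeomorph (hKU : K ⊆ closure U) (e : K ≃ₜ K') (hUK : U ⊆ K)
    (hUK' : U' ⊆ K') (he : ∀ z, (e z : Y) ∈ U' ↔ (z : X) ∈ U) : K' ⊆ closure U' := by
  have hdense : Dense (Subtype.val ⁻¹' U : Set K) := by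
    rwa [Subtype.dense_iff, Subtype.image_preimage_coe, inter_eq_right.2 hUK]
  have hpre : e.symm ⁻¹' (Subtype.val ⁻¹' U) = (Subtype.val ⁻¹' U' : Set K') := by
    ext y
    simpa using (he (e.symm y)).symm
  have hdense' := hpre ▸ hdense.preimage e.symm.isOpenMap
  rwa [Subtype.dense_iff, Subtype.image_preimage_coe, inter_eq_right.2 hUK'] at hdense'

end ConnectedPair

lemma comap_nhds_le_nhds_of_injective_at {X Y : Type*} [TopologicalSpace X] [CompactSpace X]
    [TopologicalSpace Y] [T2Space Y] {f : X → Y} (hf : Continuous f) {x : X}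
    (hx : ∀ y, f y = f x → y = x) : comap f (𝓝 (f x)) ≤ 𝓝 x :=
  le_nhds_of_unique_clusterPt fun y hy ↦
    hx y (eq_of_nhds_neBot (hy.map hf.continuousAt tendsto_comap))

section Slices

/-- The slice of `A` at height `c`, as a level set of the height on `A`. -/
def homeomorphLeafSlice {X : Type*} [TopologicalSpace X] (A : Set (X × ℝ)) (c : ℝ) :
    {x : A // x.1.2 = c} ≃ₜ leafSlice A c where
  toFun x := ⟨x.1.1.1, by obtain ⟨⟨⟨z, s⟩, hz⟩, rfl⟩ := x; exact hz⟩
  invFun z := ⟨⟨(z, c), z.2⟩, rfl⟩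
  left_inv := by rintro ⟨⟨⟨z, s⟩, hz⟩, rfl⟩; rfl
  right_inv _ := rfl

lemma homeomorphLeafSlice_mem_iff {X : Type*} [TopologicalSpace X] {A B : Set (X × ℝ)} {c : ℝ}
    (x : {x : A // x.1.2 = c}) :
    (homeomorphLeafSlice A c x : X) ∈ leafSlice B c ↔ x.1.1 ∈ B := by
  obtain ⟨⟨⟨z, s⟩, hz⟩, rfl⟩ := x
  rfl

variable {H : Type*} [NormedAddCommGroup H] {Ω : Set (H × ℝ)} {φ : Flow ℝ (closure Ω)}
  {p q : closure Ω} {c c' : ℝ}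

lemma frontier_leafSlice (hΩ : IsOpen Ω)
    (hcl : leafSlice (closure Ω) c ⊆ closure (leafSlice Ω c)) :
    frontier (leafSlice Ω c) = leafSlice (closure Ω) c \ leafSlice Ω c := by
  have hopen : IsOpen (leafSlice Ω c) := hΩ.preimage (by fun_prop)
  have hsub : closure (leafSlice Ω c) ⊆ leafSlice (closure Ω) c :=
    closure_minimal (fun z hz ↦ subset_closure hz) (isClosed_closure.preimage (by fun_prop))
  rw [hopen.frontier_eq, hcl.antisymm hsub]

lemma isIsolatedMax_or_reverse_of_isRadialCap [NormedSpace ℝ H] (hΩ : IsOpen Ω)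
    (hdisj : Disjoint (Subtype.val ⁻¹' Ω) (restPoints φ))
    (hcap : ∀ x ∈ restPoints φ, IsRadialCap Ω x) (hp : p ∈ restPoints φ) :
    IsIsolatedMax φ (fun x ↦ x.1.2) p ∨ IsIsolatedMax φ.reverse (-fun x ↦ x.1.2) p := by
  have hval : Tendsto Subtype.val (𝓝[≠] p) (𝓝[≠] p.1) :=
    tendsto_nhdsWithin_of_tendsto_nhds_of_eventually_within _
      (continuous_subtype_val.continuousAt.mono_left nhdsWithin_le_nhds)
      (eventually_mem_nhdsWithin.mono fun x hx ↦ Subtype.coe_ne_coe.2 hx)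
  have hisol : ∀ᶠ x in 𝓝[≠] p, x ∉ restPoints φ := by
    filter_upwards [hval.eventually ((hcap p hp).eventually_not_isRadialCap hΩ)] with x hx hxφ
    exact hx (hΩ.frontier_eq ▸ ⟨x.2, disjoint_right.1 hdisj hxφ⟩) (hcap x hxφ)
  obtain ⟨σ, Q, r, G⟩ := hcap p hp
  have hside : ∀ᶠ x in 𝓝[≠] p, 0 < σ * (x.1.2 - p.1.2) := by
    filter_upwards [hval.eventually (eventually_nhdsWithin_of_eventually_nhds
      (ball_mem_nhds p.1 G.pos)), hval.eventually eventually_mem_nhdsWithin] with x hx hxp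
    exact G.pos_of_mem_closure hx hxp x.2
  rcases G.sign with rfl | rfl
  · refine Or.inr ⟨by rwa [restPoints_reverse], ?_⟩
    filter_upwards [hside, hisol] with x hx hxφ
    rw [restPoints_reverse]
    exact ⟨by simpa using hx, hxφ⟩
  · refine Or.inl ⟨hp, ?_⟩
    filter_upwards [hside, hisol] with x hx hxφ
    exact ⟨by simpa using hx, hxφ⟩

theorem exists_isNorthSouth_of_isRadialCap [NormedSpace ℝ H]
    (L : IsStrictLyapunov φ (fun x ↦ x.1.2)) (hΩ : IsOpen Ω) (hconn : IsConnected Ω)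
    (hcpt : IsCompact (closure Ω)) (hdisj : Disjoint (Subtype.val ⁻¹' Ω) (restPoints φ))
    (hcap : ∀ x ∈ restPoints φ, IsRadialCap Ω x) :
    ∃ p q, IsNorthSouth φ (fun x ↦ x.1.2) p q := by
  have := isCompact_iff_compactSpace.1 hcpt
  have himage : (Subtype.val '' (Subtype.val ⁻¹' Ω : Set (closure Ω))) = Ω := by
    rw [Subtype.image_preimage_coe, inter_eq_right.2 subset_closure]
  refine L.exists_isNorthSouth
    (fun p hp ↦ isIsolatedMax_or_reverse_of_isRadialCap hΩ hdisj hcap hp) ⟨?_, ?_⟩ ?_ hdisj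
  · exact (himage.symm ▸ hconn.nonempty).of_image
  · rw [← IsInducing.subtypeVal.isPreconnected_image, himage]
    exact hconn.isPreconnected
  · rw [Subtype.dense_iff, himage]

namespace IsNorthSouth

lemma exists_homeomorph_leafSlice (N : IsNorthSouth φ (fun x ↦ x.1.2) p q)
    (hφ : IsInvariant φ (Subtype.val ⁻¹' Ω)) (hc : c ∈ Ioo p.1.2 q.1.2)
    (hc' : c' ∈ Ioo p.1.2 q.1.2) :
    ∃ e : leafSlice (closure Ω) c ≃ₜ leafSlice (closure Ω) c',
      ∀ z, (e z : H) ∈ leafSlice Ω c' ↔ (z : H) ∈ leafSlice Ω c := by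
  refine ⟨((homeomorphLeafSlice _ c).symm.trans (N.levelHomeomorph hc hc')).trans
    (homeomorphLeafSlice _ c'), fun z ↦ ?_⟩
  rw [Homeomorph.trans_apply, homeomorphLeafSlice_mem_iff]
  exact levelProj_mem_iff_of_isInvariant hφ

lemma exists_isStarBody_leafSlice [NormedSpace ℝ H] (N : IsNorthSouth φ (fun x ↦ x.1.2) p q)
    (hΩ : IsOpen Ω) (hcpt : IsCompact (closure Ω)) (hpΩ : p.1 ∉ Ω) (hp : IsRadialCap Ω p) :
    ∃ c ∈ Ioo p.1.2 q.1.2, IsStarBody p.1.1 (leafSlice Ω c) (leafSlice (closure Ω) c) := by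
  obtain ⟨σ, Q, r, G⟩ := hp
  have := isCompact_iff_compactSpace.1 hcpt
  obtain rfl : σ = 1 := by
    obtain ⟨y, hy, hyΩ⟩ := mem_closure_iff.1 p.2 _ isOpen_ball (mem_ball_self G.pos)
    have hpos := G.pos_of_mem_closure hy (ne_of_mem_of_not_mem hyΩ hpΩ) (subset_closure hyΩ)
    have hle : p.1.2 ≤ y.2 := (N.mem_Icc ⟨y, subset_closure hyΩ⟩).1
    exact G.sign.resolve_right fun h ↦ by rw [h] at hpos; linarith
  have hsmall : ∀ᶠ c in 𝓝 p.1.2, ∀ x : closure Ω, x.1.2 = c → x.1 ∈ ball p.1 r := by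
    refine eventually_comap.1 ((comap_nhds_le_nhds_of_injective_at N.continuous fun y hy ↦ ?_)
      (continuous_subtype_val.continuousAt.eventually (ball_mem_nhds p.1 G.pos)))
    exact (N.eq_of_mem_restPoints (N.restPoints_eq ▸ mem_insert p {q}) hy.symm).symm
  have hcap : ∀ᶠ c in 𝓝[>] p.1.2, c ∈ Ioo p.1.2 (p.1.2 + r) :=
    Ioo_mem_nhdsGT (lt_add_of_pos_right _ G.pos)
  have hlevel : ∀ᶠ c in 𝓝[>] p.1.2, c ∈ Ioo p.1.2 q.1.2 := Ioo_mem_nhdsGT N.lt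
  obtain ⟨c, hc, hcr, hcq⟩ :=
    ((eventually_nhdsWithin_of_eventually_nhds hsmall).and (hcap.and hlevel)).exists
  refine ⟨c, hcq, G.isStarBody_leafSlice hΩ hcpt hcr fun z hz ↦ ?_⟩
  have hmem := hc ⟨(z, c), hz⟩ rfl
  rw [← ball_prod_same] at hmem
  exact hmem.1

theorem isConnected_leafSlice [NormedSpace ℝ H] (N : IsNorthSouth φ (fun x ↦ x.1.2) p q)
    (hφ : IsInvariant φ (Subtype.val ⁻¹' Ω)) (hΩ : IsOpen Ω) (hc' : c' ∈ Ioo p.1.2 q.1.2) {x : H}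
    (S : IsStarBody x (leafSlice Ω c') (leafSlice (closure Ω) c')) (hH : 1 < Module.rank ℝ H)
    (hc : c ∈ Ioo p.1.2 q.1.2) :
    IsConnected (leafSlice Ω c) ∧ IsConnected (frontier (leafSlice Ω c)) := by
  obtain ⟨e, he⟩ := N.exists_homeomorph_leafSlice hφ hc' hc
  have hsub : leafSlice Ω c ⊆ leafSlice (closure Ω) c := fun z hz ↦ subset_closure hz
  rw [frontier_leafSlice hΩ (subset_closure_of_homeomorph S.subset_closure e S.subset hsub he)]
  exact ⟨isConnected_of_homeomorph S.isConnected e S.subset hsub he,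
    isConnected_of_homeomorph (S.isConnected_sdiff hH) e sdiff_subset sdiff_subset fun z ↦
      and_congr (by simp) (he z).not⟩

lemma leafSlice_eq_empty (N : IsNorthSouth φ (fun x ↦ x.1.2) p q)
    (hΩ : Disjoint (Subtype.val ⁻¹' Ω) (restPoints φ)) (hc : c ∉ Ioo p.1.2 q.1.2) :
    leafSlice Ω c = ∅ := by
  refine eq_empty_of_forall_notMem fun z hz ↦ hc ?_
  have hx : ⟨(z, c), subset_closure hz⟩ ∉ restPoints φ := disjoint_left.1 hΩ hz
  exact N.apply_mem_Ioo_iff.2 hx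

theorem nonempty_frontier_homeomorph_sphere [NormedSpace ℝ H] {E : Type*} [NormedAddCommGroup E]
    [NormedSpace ℝ E] (N : IsNorthSouth φ (fun x ↦ x.1.2) p q)
    (hφ : IsInvariant φ (Subtype.val ⁻¹' Ω)) (hΩ : IsOpen Ω) (hcpt : IsCompact (closure Ω))
    (hp : p.1 ∉ Ω) (hq : q.1 ∉ Ω) (hc : c ∈ Ioo p.1.2 q.1.2) {x : H}
    (S : IsStarBody x (leafSlice Ω c) (leafSlice (closure Ω) c)) (L : H ≃L[ℝ] E) :
    Nonempty (frontier Ω ≃ₜ sphere (0 : WithLp 2 (E × ℝ)) 1) := by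
  have hmem (y : closure Ω) : y.1 ∈ frontier Ω ↔ y.1 ∉ Ω := by
    rw [hΩ.frontier_eq]
    exact and_iff_right y.2
  have hinv : IsInvariant φ (Subtype.val ⁻¹' frontier Ω) := fun t y hy ↦
    (hmem _).2 ((map_mem_iff_of_isInvariant hφ).not.2 ((hmem y).1 hy))
  have hslice : leafSlice (frontier Ω) c = leafSlice (closure Ω) c \ leafSlice Ω c := by
    rw [hΩ.frontier_eq]
    rfl
  have := isCompact_iff_compactSpace.1 hcpt
  have := isCompact_iff_compactSpace.1
    ((isClosed_frontier.preimage continuous_subtype_val).isCompact : IsCompact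
      (Subtype.val ⁻¹' frontier Ω : Set (closure Ω)))
  let f : (Subtype.val ⁻¹' frontier Ω : Set (closure Ω)) ≃ₜ frontier Ω :=
    (IsEmbedding.subtypeVal.homeomorphImage _).trans (Homeomorph.setCongr
      (by rw [Subtype.image_preimage_coe, inter_eq_right.2 frontier_subset_closure]))
  let e := (f.subtype (p := fun y ↦ y.1.1.2 = c) (q := fun y ↦ y.1.2 = c) fun _ ↦ Iff.rfl).trans
    ((homeomorphLeafSlice _ c).trans ((Homeomorph.setCongr hslice).trans (S.homeomorphSphere L)))
  obtain ⟨g⟩ := (N.restrict hinv ((hmem p).2 hp) ((hmem q).2 hq)).nonempty_homeomorph_sphere hc e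
  exact ⟨f.symm.trans g⟩

end IsNorthSouth

end Slices

lemma nonempty_homeomorph_sphere_of_finrank_eq {V W : Type*} [NormedAddCommGroup V]
    [InnerProductSpace ℝ V] [FiniteDimensional ℝ V] [NormedAddCommGroup W] [InnerProductSpace ℝ W]
    [FiniteDimensional ℝ W] (h : Module.finrank ℝ V = Module.finrank ℝ W) :
    Nonempty (sphere (0 : V) 1 ≃ₜ sphere (0 : W) 1) :=
  ⟨((stdOrthonormalBasis ℝ V).equiv (stdOrthonormalBasis ℝ W) (finCongr h)).toHomeomorph.subtype
    fun v ↦ by simp⟩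

section Domain

variable {H : Type*} [NormedAddCommGroup H] [NormedSpace ℝ H] [FiniteDimensional ℝ H]
  {Ω : Set (H × ℝ)} {ρ : H × ℝ → ℝ}

theorem stmt_16_general {m : ℕ} (hm : Module.finrank ℝ H = m) (h2 : 2 ≤ m)
    (hbdd : Bornology.IsBounded Ω) (hconn : IsConnected Ω) (D : IsDefiningFunction ρ Ω)
    (hcap : ∀ p ∈ singularSet ρ Ω, IsRadialCap Ω p) :
    (∃ p₁ p₂, p₁ ≠ p₂ ∧ singularSet ρ Ω = {p₁, p₂}) ∧
    Nonempty (frontier Ω ≃ₜ sphere (0 : EuclideanSpace ℝ (Fin (m + 1))) 1) ∧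
    ∀ c, leafSlice Ω c = ∅ ∨ (IsConnected (leafSlice Ω c) ∧ Bornology.IsBounded (leafSlice Ω c) ∧
      IsConnected (frontier (leafSlice Ω c))) := by
  have hsing : singularSet ρ Ω ⊆ frontier Ω := fun x hx ↦ hx.1
  obtain ⟨φ, L, hrest, hφ⟩ := D.exists_climbingFlow hbdd
  have hcpt := hbdd.isCompact_closure
  have hdisj : Disjoint (Subtype.val ⁻¹' Ω) (restPoints φ) := hrest ▸
    ((disjoint_frontier_iff_isOpen.2 D.isOpen).symm.mono_right hsing).preimage _
  obtain ⟨p, q, N⟩ := exists_isNorthSouth_of_isRadialCap L D.isOpen hconn hcpt hdisj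
    fun x hx ↦ hcap x (hrest.subset hx)
  have hp : p ∈ restPoints φ := N.restPoints_eq ▸ mem_insert p {q}
  have hq : q ∈ restPoints φ := N.restPoints_eq ▸ mem_insert_of_mem p rfl
  obtain ⟨c₀, hc₀, S⟩ := N.exists_isStarBody_leafSlice D.isOpen hcpt (disjoint_right.1 hdisj hp)
    (hcap p (hrest.subset hp))
  refine ⟨⟨p, q, fun h ↦ N.lt.ne (by rw [h]), ?_⟩, ?_, fun c ↦ ?_⟩
  · rw [← image_pair, ← N.restPoints_eq, hrest, Subtype.image_preimage_coe,
      inter_eq_right.2 (hsing.trans frontier_subset_closure)]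
  · obtain ⟨e⟩ := N.nonempty_frontier_homeomorph_sphere hφ D.isOpen hcpt
      (disjoint_right.1 hdisj hp) (disjoint_right.1 hdisj hq) hc₀ S
      (ContinuousLinearEquiv.ofFinrankEq (hm.trans (finrank_euclideanSpace_fin (𝕜 := ℝ)).symm))
    obtain ⟨f⟩ := nonempty_homeomorph_sphere_of_finrank_eq
      (V := WithLp 2 (EuclideanSpace ℝ (Fin m) × ℝ)) (W := EuclideanSpace ℝ (Fin (m + 1)))
      (by simp [(WithLp.linearEquiv 2 ℝ (EuclideanSpace ℝ (Fin m) × ℝ)).finrank_eq])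
    exact ⟨e.trans f⟩
  · by_cases hc : c ∈ Ioo p.1.2 q.1.2
    · have hrank : 1 < Module.rank ℝ H := by
        rw [← Module.finrank_eq_rank, hm]
        exact_mod_cast h2
      obtain ⟨hslice, hboundary⟩ := N.isConnected_leafSlice hφ D.isOpen hc₀ S hrank hc
      exact Or.inr ⟨hslice, hbdd.image_fst.subset fun z hz ↦ ⟨(z, c), hz, rfl⟩, hboundary⟩
    · exact Or.inl (N.leafSlice_eq_empty hdisj hc)

end Domain

theorem stmt_16 (n : ℕ) (hn : 1 ≤ n) (Ω : Set ((Fin n → ℂ) × ℝ))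
    (hΩopen : IsOpen Ω) (hΩbdd : Bornology.IsBounded Ω)
    (hΩconn : IsConnected Ω)
    (ρ : ((Fin n → ℂ) × ℝ) → ℝ) (hρsm : ContDiff ℝ (⊤ : ℕ∞) ρ)
    (hρΩ : Ω = {p | ρ p < 0}) (hρbd : frontier Ω = {p | ρ p = 0})
    (hρreg : ∀ p ∈ frontier Ω, fderiv ℝ ρ p ≠ 0)
    (hsing : ∀ p, CRSingular n ρ Ω p → NondegElliptic n Ω p) :
    (∃ p₁ p₂ : (Fin n → ℂ) × ℝ, p₁ ≠ p₂ ∧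
      {p | CRSingular n ρ Ω p} = {p₁, p₂}) ∧
    Nonempty (frontier Ω ≃ₜ Metric.sphere (0 : EuclideanSpace ℝ (Fin (2*n+1))) 1) ∧
    (∀ c : ℝ,
      {z : Fin n → ℂ | (z, c) ∈ Ω} = ∅ ∨
      (IsConnected {z : Fin n → ℂ | (z, c) ∈ Ω} ∧
        Bornology.IsBounded {z : Fin n → ℂ | (z, c) ∈ Ω} ∧
        IsConnected (frontier {z : Fin n → ℂ | (z, c) ∈ Ω}))) :=
  stmt_16_general (m := 2 * n)
    (by rw [Module.finrank_pi_fintype]; simp [Complex.finrank_real_complex, mul_comm])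
    (by omega) hΩbdd hΩconn ⟨hρsm.of_le (by norm_cast), hρΩ, hρbd⟩
    fun p hp ↦ (hsing p hp).isRadialCap
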